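/- arXiv:0904.2288 — 3 statements merged into one kernel-verified Lean document; each statement's English description precedes it below -/
import Mathlib

section
/- Let E₁ and E₂ be metrizable topological spaces with their Borel σ-algebras, let Ψ : E₁ × E₂ → ℝ be bounded and jointly Borel measurable, and let Φ₁, Φ₂ : E₁ × E₂ → ℝ be jointly Borel measurable. Let X¹ and X² be independent càdlàg processes with values in E₁ and E₂ such that for each x₂ ∈ E₂ the process t ↦ Ψ(X¹_t, x₂) − ∫₀ᵗ Φ₁(X¹_s, x₂) ds is a martingale with respect to the filtration generated by X¹ (with E[|Ψ(X¹_t,x₂)|] < ∞ and ∫₀ᵗ E[|Φ₁(X¹_s,x₂)|] ds < ∞ for all t ≥ 0), and symmetrically for X² and Φ₂. Then the function T ↦ E[Ψ(X¹_T, X²_0)] − E[Ψ(X¹_0, X²_T)] is continuous on [0,∞). -/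
open MeasureTheory ProbabilityTheory Filter Set
open scoped NNReal ENNReal

/-!
Taking expectations in the martingale problem gives
`E[Ψ(X¹_t, x₂)] = E[Ψ(X¹_0, x₂)] + ∫₀ᵗ E[Φ₁(X¹_s, x₂)] ds`, so this expectation is continuous in `t`
for each fixed `x₂`. By independence `E[Ψ(X¹_T, X²_0)]` is the average of these continuous functions
over the law of `X²_0`; since they are bounded by `sup |Ψ|`, dominated convergence makes the average
continuous. The other term is symmetric.
-/

section Measurability

lemma tendsto_natCeil_mul_div_nhdsGE {t : ℝ} (ht : 0 ≤ t) :
    Tendsto (fun n : ℕ => (⌈t * n⌉₊ : ℝ) / n) atTop (nhdsWithin t (Ici t)) := by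
  refine tendsto_nhdsWithin_iff.2
    ⟨(tendsto_nat_ceil_mul_div_atTop ht).comp tendsto_natCast_atTop_atTop, ?_⟩
  filter_upwards [eventually_gt_atTop 0] with n hn
  have hn' : (0 : ℝ) < n := Nat.cast_pos.2 hn
  exact (le_div_iff₀ hn').2 (Nat.le_ceil _)

-- Sampling the path at the right endpoint of the mesh-`1/n` cell of `t` gives a process that is
-- jointly measurable because it takes only countably many time values.
lemma measurable_uncurry_of_rightContinuous {Ω E : Type*} [MeasurableSpace Ω]
    [TopologicalSpace E] [TopologicalSpace.PseudoMetrizableSpace E]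
    [MeasurableSpace E] [BorelSpace E] {X : ℝ → Ω → E}
    (hX : ∀ t, 0 ≤ t → Measurable (X t))
    (hrc : ∀ ω, ∀ t : ℝ, 0 ≤ t → ContinuousWithinAt (fun s => X s ω) (Ici t) t) :
    Measurable (fun p : ℝ≥0 × Ω => X p.1 p.2) := by
  refine measurable_of_tendsto_metrizable
    (f := fun (n : ℕ) (p : ℝ≥0 × Ω) => X ((⌈(p.1 : ℝ) * n⌉₊ : ℝ) / n) p.2)
    (fun n => ?_) (tendsto_pi_nhds.2 fun p => ?_)
  · have h_grid : Measurable (fun q : Ω × ℕ => X ((q.2 : ℝ) / n) q.1) :=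
      measurable_from_prod_countable_left fun k => hX ((k : ℝ) / n) (by positivity)
    have h_index : Measurable (fun p : ℝ≥0 × Ω => (p.2, ⌈(p.1 : ℝ) * n⌉₊)) := by fun_prop
    exact h_grid.comp h_index
  · exact (hrc p.2 p.1 p.1.2).tendsto.comp (tendsto_natCeil_mul_div_nhdsGE p.1.2)

lemma integrable_uncurry_of_lintegral_enorm_lt_top {Ω G : Type*} [MeasurableSpace Ω]
    [NormedAddCommGroup G] {P : Measure Ω} [SFinite P] {F : ℝ → Ω → G} {t : ℝ}
    (hF : StronglyMeasurable (fun p : ℝ≥0 × Ω => F p.1 p.2))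
    (hfin : (∫⁻ s in Icc (0 : ℝ) t, ∫⁻ ω, ‖F s ω‖ₑ ∂P) < ⊤) :
    Integrable (fun p : ℝ × Ω => F p.1 p.2) ((volume.restrict (Icc 0 t)).prod P) := by
  have h_meas : AEStronglyMeasurable (fun p : ℝ × Ω => F p.1 p.2)
      ((volume.restrict (Icc 0 t)).prod P) := by
    have h_toNNReal : StronglyMeasurable (fun p : ℝ × Ω => F p.1.toNNReal p.2) :=
      hF.comp_measurable (by fun_prop : Measurable fun p : ℝ × Ω => (p.1.toNNReal, p.2))
    refine h_toNNReal.aestronglyMeasurable.congr ?_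
    filter_upwards [Measure.quasiMeasurePreserving_fst.ae (ae_restrict_mem measurableSet_Icc)]
      with p hp
    rw [Real.coe_toNNReal _ hp.1]
  refine ⟨h_meas, ?_⟩
  rwa [HasFiniteIntegral, lintegral_prod _ h_meas.enorm]

lemma integrable_comp_of_rightContinuous {Ω E : Type*} [MeasurableSpace Ω]
    {P : Measure Ω} [SFinite P] [TopologicalSpace E] [TopologicalSpace.PseudoMetrizableSpace E]
    [MeasurableSpace E] [BorelSpace E] {f : E → ℝ} {X : ℝ → Ω → E} {t : ℝ}
    (hf : Measurable f) (hX : ∀ t, 0 ≤ t → Measurable (X t))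
    (hrc : ∀ ω, ∀ t : ℝ, 0 ≤ t → ContinuousWithinAt (fun s => X s ω) (Ici t) t)
    (hfin : (∫⁻ s in Icc (0 : ℝ) t, ∫⁻ ω, ENNReal.ofReal |f (X s ω)| ∂P) < ⊤) :
    Integrable (fun p : ℝ × Ω => f (X p.1 p.2)) ((volume.restrict (Icc 0 t)).prod P) :=
  integrable_uncurry_of_lintegral_enorm_lt_top (F := fun s ω => f (X s ω))
    (hf.comp (measurable_uncurry_of_rightContinuous hX hrc)).stronglyMeasurable
    (by simpa only [Real.enorm_eq_ofReal_abs] using hfin)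

end Measurability

section MeanContinuity

lemma continuousOn_primitive_Ici {E : Type*} [NormedAddCommGroup E] [NormedSpace ℝ E]
    {f : ℝ → E} {a : ℝ} (hf : ∀ b, a ≤ b → IntegrableOn f (Icc a b)) :
    ContinuousOn (fun t => ∫ s in a..t, f s) (Ici a) := by
  intro t ht
  have hat : a ≤ t + 1 := (mem_Ici.1 ht).trans (by linarith)
  have h_Icc : ContinuousOn (fun t => ∫ s in a..t, f s) (Icc a (t + 1)) := by
    simpa only [uIcc_of_le hat] using
      intervalIntegral.continuousOn_primitive_interval
        ((uIcc_of_le hat).symm ▸ hf _ hat : IntegrableOn f (uIcc a (t + 1)))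
  refine (h_Icc t ⟨ht, by linarith⟩).mono_of_mem_nhdsWithin ?_
  exact inter_mem_nhdsWithin _ (Iic_mem_nhds (by linarith))

variable {Ω E : Type*} {mΩ : MeasurableSpace Ω} {P : Measure Ω} [IsFiniteMeasure P]
  [NormedAddCommGroup E] [NormedSpace ℝ E] [CompleteSpace E]
  {ℱ : Filtration ℝ≥0 mΩ} {Z F : ℝ → Ω → E}

lemma integral_eq_add_intervalIntegral_of_martingale_sub {t : ℝ} (ht : 0 ≤ t)
    (hF : Integrable (fun p : ℝ × Ω => F p.1 p.2) ((volume.restrict (Icc 0 t)).prod P))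
    (hmart : Martingale (fun (t : ℝ≥0) ω => Z t ω - ∫ s in (0 : ℝ)..t, F s ω) ℱ P) :
    ∫ ω, Z t ω ∂P = ∫ ω, Z 0 ω ∂P + ∫ s in (0 : ℝ)..t, ∫ ω, F s ω ∂P := by
  lift t to ℝ≥0 using ht
  have hF' : Integrable (fun p : ℝ × Ω => F p.1 p.2)
      ((volume.restrict (Ioc 0 (t : ℝ))).prod P) := by
    rwa [restrict_Ioc_eq_restrict_Icc]
  have h_drift : Integrable (fun ω => ∫ s in (0 : ℝ)..t, F s ω) P := by
    simpa only [intervalIntegral.integral_of_le t.coe_nonneg] using hF'.integral_prod_right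
  have h_fubini : ∫ ω, (∫ s in (0 : ℝ)..t, F s ω) ∂P = ∫ s in (0 : ℝ)..t, ∫ ω, F s ω ∂P := by
    simpa only [intervalIntegral.integral_of_le t.coe_nonneg] using
      (integral_integral_swap hF').symm
  have h_mean : ∫ ω, (Z t ω - ∫ s in (0 : ℝ)..t, F s ω) ∂P = ∫ ω, Z 0 ω ∂P := by
    simpa using (hmart.setIntegral_eq (zero_le (a := t)) MeasurableSet.univ).symm
  calc ∫ ω, Z t ω ∂P
      = ∫ ω, ((Z t ω - ∫ s in (0 : ℝ)..t, F s ω) + ∫ s in (0 : ℝ)..t, F s ω) ∂P := by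
        simp only [sub_add_cancel]
    _ = ∫ ω, (Z t ω - ∫ s in (0 : ℝ)..t, F s ω) ∂P + ∫ ω, (∫ s in (0 : ℝ)..t, F s ω) ∂P :=
        integral_add (hmart.integrable t) h_drift
    _ = ∫ ω, Z 0 ω ∂P + ∫ s in (0 : ℝ)..t, ∫ ω, F s ω ∂P := by rw [h_mean, h_fubini]

lemma continuousOn_integral_of_martingale_sub
    (hF : ∀ t : ℝ, 0 ≤ t →
      Integrable (fun p : ℝ × Ω => F p.1 p.2) ((volume.restrict (Icc 0 t)).prod P))
    (hmart : Martingale (fun (t : ℝ≥0) ω => Z t ω - ∫ s in (0 : ℝ)..t, F s ω) ℱ P) :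
    ContinuousOn (fun t : ℝ => ∫ ω, Z t ω ∂P) (Ici 0) :=
  (continuousOn_const.add
    (continuousOn_primitive_Ici fun t ht => (hF t ht).integral_prod_left)).congr
    fun t ht => integral_eq_add_intervalIntegral_of_martingale_sub ht (hF t ht) hmart

end MeanContinuity

section Independence

variable {Ω E F G : Type*} [MeasurableSpace Ω] {P : Measure Ω} [IsFiniteMeasure P]
  [MeasurableSpace E] [MeasurableSpace F] [NormedAddCommGroup G] [NormedSpace ℝ G]

lemma integral_comp_prodMk_of_indepFun {X : Ω → E} {Y : Ω → F}
    (hX : AEMeasurable X P) (hY : AEMeasurable Y P) (hindep : IndepFun X Y P) {Ψ : E × F → G}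
    (hΨm : StronglyMeasurable Ψ) (hΨ : Integrable Ψ ((P.map X).prod (P.map Y))) :
    ∫ ω, Ψ (X ω, Y ω) ∂P = ∫ y, ∫ ω, Ψ (X ω, y) ∂P ∂(P.map Y) := by
  calc ∫ ω, Ψ (X ω, Y ω) ∂P
      = ∫ p, Ψ p ∂((P.map X).prod (P.map Y)) := by
        rw [← hindep.map_prod_eq_prod_map_map hX hY,
          integral_map (hX.prodMk hY) hΨm.aestronglyMeasurable]
    _ = ∫ y, ∫ x, Ψ (x, y) ∂(P.map X) ∂(P.map Y) := integral_prod_symm Ψ hΨ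
    _ = ∫ y, ∫ ω, Ψ (X ω, y) ∂P ∂(P.map Y) := by
        refine integral_congr_ae (Eventually.of_forall fun y => ?_)
        exact integral_map hX (hΨm.comp_measurable measurable_prodMk_right).aestronglyMeasurable

lemma continuousOn_integral_comp_prodMk_of_indepFun {ι : Type*} [TopologicalSpace ι]
    [FirstCountableTopology ι] {s : Set ι} {X : ι → Ω → E} {Y : Ω → F}
    (hX : ∀ t ∈ s, AEMeasurable (X t) P) (hY : AEMeasurable Y P)
    (hindep : ∀ t ∈ s, IndepFun (X t) Y P) {Ψ : E × F → G}
    (hΨm : StronglyMeasurable Ψ) {C : ℝ} (hΨb : ∀ x, ‖Ψ x‖ ≤ C)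
    (hcont : ∀ y, ContinuousOn (fun t => ∫ ω, Ψ (X t ω, y) ∂P) s) :
    ContinuousOn (fun t => ∫ ω, Ψ (X t ω, Y ω) ∂P) s := by
  have h_average : ContinuousOn (fun t => ∫ y, ∫ ω, Ψ (X t ω, y) ∂P ∂(P.map Y)) s := by
    refine continuousOn_of_dominated (bound := fun _ => C * P.real univ) (fun t ht => ?_)
      (fun t _ => ?_) (integrable_const _) (Eventually.of_forall hcont)
    · have h_law : StronglyMeasurable (fun y => ∫ x, Ψ (x, y) ∂(P.map (X t))) :=
        hΨm.integral_prod_left'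
      refine h_law.aestronglyMeasurable.congr (Eventually.of_forall fun y => ?_)
      exact integral_map (hX t ht)
        (hΨm.comp_measurable measurable_prodMk_right).aestronglyMeasurable
    · exact Eventually.of_forall fun y =>
        norm_integral_le_of_norm_le_const (Eventually.of_forall fun ω => hΨb _)
  refine h_average.congr fun t ht => ?_
  exact integral_comp_prodMk_of_indepFun (hX t ht) hY (hindep t ht) hΨm
    (.of_bound hΨm.aestronglyMeasurable C (Eventually.of_forall hΨb))

end Independence

theorem duality_lhs_continuous_general
    {Ω : Type*} {mΩ : MeasurableSpace Ω} {P : Measure Ω} [IsFiniteMeasure P]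
    {E₁ E₂ : Type*} [MeasurableSpace E₁] [MeasurableSpace E₂]
    {Ψ Φ₁ Φ₂ : E₁ × E₂ → ℝ}
    (hΨm : Measurable Ψ) {C : ℝ} (hΨb : ∀ x, |Ψ x| ≤ C)
    {X₁ : ℝ → Ω → E₁} {X₂ : ℝ → Ω → E₂}
    (hX₁m : ∀ t, 0 ≤ t → AEMeasurable (X₁ t) P)
    (hX₂m : ∀ t, 0 ≤ t → AEMeasurable (X₂ t) P)
    (hindep₁ : ∀ t, 0 ≤ t → IndepFun (X₁ t) (X₂ 0) P)
    (hindep₂ : ∀ t, 0 ≤ t → IndepFun (X₂ t) (X₁ 0) P)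
    {ℱ₁ ℱ₂ : Filtration ℝ≥0 mΩ}
    (hΦint₁ : ∀ x₂, ∀ t : ℝ, 0 ≤ t →
      Integrable (fun p : ℝ × Ω => Φ₁ (X₁ p.1 p.2, x₂)) ((volume.restrict (Icc 0 t)).prod P))
    (hmart₁ : ∀ x₂, Martingale
      (fun (t : ℝ≥0) ω => Ψ (X₁ t ω, x₂) - ∫ s in (0 : ℝ)..t, Φ₁ (X₁ s ω, x₂)) ℱ₁ P)
    (hΦint₂ : ∀ x₁, ∀ t : ℝ, 0 ≤ t →
      Integrable (fun p : ℝ × Ω => Φ₂ (x₁, X₂ p.1 p.2)) ((volume.restrict (Icc 0 t)).prod P))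
    (hmart₂ : ∀ x₁, Martingale
      (fun (t : ℝ≥0) ω => Ψ (x₁, X₂ t ω) - ∫ s in (0 : ℝ)..t, Φ₂ (x₁, X₂ s ω)) ℱ₂ P) :
    ContinuousOn
      (fun T : ℝ => (∫ ω, Ψ (X₁ T ω, X₂ 0 ω) ∂P) - ∫ ω, Ψ (X₁ 0 ω, X₂ T ω) ∂P)
      (Ici (0 : ℝ)) := by
  have h_fst : ContinuousOn (fun T : ℝ => ∫ ω, Ψ (X₁ T ω, X₂ 0 ω) ∂P) (Ici 0) :=
    continuousOn_integral_comp_prodMk_of_indepFun hX₁m (hX₂m 0 le_rfl) hindep₁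
      hΨm.stronglyMeasurable hΨb
      fun x₂ => continuousOn_integral_of_martingale_sub (hΦint₁ x₂) (hmart₁ x₂)
  have h_snd : ContinuousOn (fun T : ℝ => ∫ ω, Ψ (X₁ 0 ω, X₂ T ω) ∂P) (Ici 0) :=
    continuousOn_integral_comp_prodMk_of_indepFun hX₂m (hX₁m 0 le_rfl) hindep₂
      (Ψ := Ψ ∘ Prod.swap) (hΨm.comp measurable_swap).stronglyMeasurable (fun x => hΨb x.swap)
      fun x₁ => continuousOn_integral_of_martingale_sub (hΦint₂ x₁) (hmart₂ x₁)
  exact h_fst.sub h_snd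

/-- **Duality with error term** (Athreya–Swart, correction to "Branching-coalescing
particle systems", Theorem 1, continuity part). -/
theorem duality_lhs_continuous
    {Ω : Type*} [MeasurableSpace Ω] (P : Measure Ω) [IsProbabilityMeasure P]
    {E₁ E₂ : Type*}
    [TopologicalSpace E₁] [TopologicalSpace.MetrizableSpace E₁]
    [MeasurableSpace E₁] [BorelSpace E₁]
    [TopologicalSpace E₂] [TopologicalSpace.MetrizableSpace E₂]
    [MeasurableSpace E₂] [BorelSpace E₂]
    (Ψ Φ₁ Φ₂ : E₁ × E₂ → ℝ)
    (hΨm : Measurable Ψ) (C : ℝ) (hΨb : ∀ x, |Ψ x| ≤ C)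
    (hΦ₁m : Measurable Φ₁) (hΦ₂m : Measurable Φ₂)
    (X₁ : ℝ → Ω → E₁) (X₂ : ℝ → Ω → E₂)
    (hX₁sm : ∀ t, StronglyMeasurable (X₁ t))
    (hX₂sm : ∀ t, StronglyMeasurable (X₂ t))
    -- càdlàg sample paths on [0,∞)
    (hX₁rc : ∀ ω, ∀ t : ℝ, 0 ≤ t → ContinuousWithinAt (fun s => X₁ s ω) (Ici t) t)
    (hX₁ll : ∀ ω, ∀ t : ℝ, 0 < t →
      ∃ l, Tendsto (fun s => X₁ s ω) (nhdsWithin t (Iio t)) (nhds l))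
    (hX₂rc : ∀ ω, ∀ t : ℝ, 0 ≤ t → ContinuousWithinAt (fun s => X₂ s ω) (Ici t) t)
    (hX₂ll : ∀ ω, ∀ t : ℝ, 0 < t →
      ∃ l, Tendsto (fun s => X₂ s ω) (nhdsWithin t (Iio t)) (nhds l))
    -- X¹ and X² are independent
    (hindep : IndepFun (fun ω t => X₁ t ω) (fun ω t => X₂ t ω) P)
    -- martingale problem for X¹ (with integrability), for every x₂
    (hΨint₁ : ∀ x₂, ∀ t : ℝ, 0 ≤ t → Integrable (fun ω => Ψ (X₁ t ω, x₂)) P)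
    (hΦint₁ : ∀ x₂, ∀ t : ℝ, 0 ≤ t →
      (∫⁻ s in Icc (0 : ℝ) t, ∫⁻ ω, ENNReal.ofReal |Φ₁ (X₁ s ω, x₂)| ∂P) < ⊤)
    (hmart₁ : ∀ x₂, Martingale
      (fun (t : ℝ≥0) ω => Ψ (X₁ t ω, x₂) - ∫ s in (0 : ℝ)..(t : ℝ), Φ₁ (X₁ s ω, x₂))
      (Filtration.natural (fun (t : ℝ≥0) => X₁ t) (fun t => hX₁sm t)) P)
    -- martingale problem for X² (with integrability), for every x₁
    (hΨint₂ : ∀ x₁, ∀ t : ℝ, 0 ≤ t → Integrable (fun ω => Ψ (x₁, X₂ t ω)) P)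
    (hΦint₂ : ∀ x₁, ∀ t : ℝ, 0 ≤ t →
      (∫⁻ s in Icc (0 : ℝ) t, ∫⁻ ω, ENNReal.ofReal |Φ₂ (x₁, X₂ s ω)| ∂P) < ⊤)
    (hmart₂ : ∀ x₁, Martingale
      (fun (t : ℝ≥0) ω => Ψ (x₁, X₂ t ω) - ∫ s in (0 : ℝ)..(t : ℝ), Φ₂ (x₁, X₂ s ω))
      (Filtration.natural (fun (t : ℝ≥0) => X₂ t) (fun t => hX₂sm t)) P)    :
    ContinuousOn
      (fun T : ℝ => (∫ ω, Ψ (X₁ T ω, X₂ 0 ω) ∂P) - ∫ ω, Ψ (X₁ 0 ω, X₂ T ω) ∂P)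
      (Ici (0 : ℝ)) :=
  duality_lhs_continuous_general hΨm hΨb
    (fun t _ => (hX₁sm t).measurable.aemeasurable) (fun t _ => (hX₂sm t).measurable.aemeasurable)
    (fun t _ => hindep.comp (measurable_pi_apply t) (measurable_pi_apply 0))
    (fun t _ => hindep.symm.comp (measurable_pi_apply t) (measurable_pi_apply 0))
    (fun x₂ t ht => integrable_comp_of_rightContinuous (hΦ₁m.comp measurable_prodMk_right)
      (fun t _ => (hX₁sm t).measurable) hX₁rc (hΦint₁ x₂ t ht)) hmart₁
    (fun x₁ t ht => integrable_comp_of_rightContinuous (hΦ₂m.comp measurable_prodMk_left)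
      (fun t _ => (hX₂sm t).measurable) hX₂rc (hΦint₂ x₁ t ht)) hmart₂
end

section
/- Let E₁ and E₂ be metrizable topological spaces with their Borel σ-algebras, let Ψ : E₁ × E₂ → ℝ be bounded and jointly Borel measurable, and let Φ₁, Φ₂ : E₁ × E₂ → ℝ be jointly Borel measurable. Let X¹ and X² be independent càdlàg processes with values in E₁ and E₂ such that for each x₂ ∈ E₂ the process t ↦ Ψ(X¹_t, x₂) − ∫₀ᵗ Φ₁(X¹_s, x₂) ds is a martingale with respect to the filtration generated by X¹ (with the integrability conditions E[|Ψ(X¹_t,x₂)|] < ∞ and ∫₀ᵗ E[|Φ₁(X¹_s,x₂)|] ds < ∞ for all t), and symmetrically for X² and Φ₂. Assume ∫₀ᵀ∫₀ᵀ E[|Φᵢ(X¹_s, X²_t)|] ds dt < ∞ for all T ≥ 0, i = 1,2. With R := Φ₁ − Φ₂, the integrated duality relation holds for every S > 0: ∫₀ˢ ( E[Ψ(X¹_T, X²_0)] − E[Ψ(X¹_0, X²_T)] ) dT = ∫₀ˢ ∫₀ᵀ E[R(X¹_t, X²_{T−t})] dt dT. -/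
open MeasureTheory ProbabilityTheory Filter Set
open scoped NNReal ENNReal

/-!
Let `F (s, t)` be the mean of `Ψ (X₁ s, X₂ t)`, and `fᵢ (s, t)` the mean of `Φᵢ (X₁ s, X₂ t)`.
Independence lets one process be frozen while the other one runs, so the martingale problems say
that `f₁` is the derivative of `F` in `s` and `f₂` its derivative in `t`. Integrate `f₁` over the
triangle `0 < s, 0 < t, s + t ≤ S` along `s` first, and `f₂` along `t` first. Each time the result
is the integral of `F` over the hypotenuse minus its integral over one leg. In the difference the
hypotenuse cancels and the two legs remain, while slicing the triangle along the lines `s + t = T`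
gives the integral of `f₁ - f₂` in the form it has in the theorem.
-/

section TriangleIntegrals

variable {E : Type*} [NormedAddCommGroup E] [NormedSpace ℝ E]

lemma setIntegral_eq_integral_integral_preimage_prodMk {α β : Type*} [MeasurableSpace α]
    [MeasurableSpace β] {μ : Measure α} {ν : Measure β} [SFinite μ] [SFinite ν]
    {A : Set (α × β)} (hA : MeasurableSet A) {s : Set α} (hAs : ∀ p ∈ A, p.1 ∈ s)
    {f : α × β → E} (hf : IntegrableOn f A (μ.prod ν)) :
    ∫ p in A, f p ∂μ.prod ν = ∫ x in s, ∫ y in Prod.mk x ⁻¹' A, f (x, y) ∂ν ∂μ := by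
  have section_integral (x : α) :
      ∫ y, A.indicator f (x, y) ∂ν = ∫ y in Prod.mk x ⁻¹' A, f (x, y) ∂ν :=
    integral_indicator (measurable_prodMk_left hA)
  rw [← integral_indicator hA, integral_prod _ (hf.integrable_indicator hA)]
  simp only [section_integral]
  refine (setIntegral_eq_integral_of_forall_compl_eq_zero fun x hx => ?_).symm
  have section_empty : Prod.mk x ⁻¹' A = ∅ :=
    eq_empty_of_forall_notMem fun _ hy => hx (hAs _ hy)
  rw [section_empty, setIntegral_empty]

/-- The triangle with vertices `(0, 0)`, `(S, 0)`, `(0, S)`, the region of time pairs on which the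
two processes are compared. Its legs are left out so that it lies inside `Ioc 0 S ×ˢ Ioc 0 S`. -/
def timeTriangle (S : ℝ) : Set (ℝ × ℝ) := {p | 0 < p.1 ∧ 0 < p.2 ∧ p.1 + p.2 ≤ S}

lemma measurableSet_timeTriangle (S : ℝ) : MeasurableSet (timeTriangle S) := by
  unfold timeTriangle
  measurability

lemma timeTriangle_subset_Ioc_prod_Ioc (S : ℝ) : timeTriangle S ⊆ Ioc 0 S ×ˢ Ioc 0 S := by
  rintro ⟨u, v⟩ ⟨hu, hv, huv⟩
  dsimp only at hu hv huv
  exact ⟨⟨hu, by linarith⟩, ⟨hv, by linarith⟩⟩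

lemma preimage_swap_timeTriangle (S : ℝ) : Prod.swap ⁻¹' timeTriangle S = timeTriangle S := by
  ext ⟨u, v⟩
  simp only [timeTriangle, mem_preimage, Prod.swap_prod_mk, mem_ofPred_eq, add_comm v u]
  tauto

lemma setIntegral_timeTriangle {S : ℝ} (hS : 0 ≤ S) {φ : ℝ × ℝ → E}
    (hφ : IntegrableOn φ (timeTriangle S)) :
    ∫ p in timeTriangle S, φ p = ∫ u in (0 : ℝ)..S, ∫ v in (0 : ℝ)..(S - u), φ (u, v) := by
  rw [Measure.volume_eq_prod, setIntegral_eq_integral_integral_preimage_prodMk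
    (measurableSet_timeTriangle S) (fun p hp => (timeTriangle_subset_Ioc_prod_Ioc S hp).1) hφ,
    intervalIntegral.integral_of_le hS]
  refine setIntegral_congr_fun measurableSet_Ioc fun u hu => ?_
  have section_eq : Prod.mk u ⁻¹' timeTriangle S = Ioc 0 (S - u) := by
    ext v
    simp only [timeTriangle, mem_preimage, mem_ofPred_eq, mem_Ioc, hu.1, true_and,
      le_sub_iff_add_le']
  simp only [section_eq, intervalIntegral.integral_of_le (sub_nonneg.2 hu.2)]

lemma setIntegral_timeTriangle_symm {S : ℝ} (hS : 0 ≤ S) {φ : ℝ × ℝ → E}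
    (hφ : IntegrableOn φ (timeTriangle S)) :
    ∫ p in timeTriangle S, φ p = ∫ v in (0 : ℝ)..S, ∫ u in (0 : ℝ)..(S - v), φ (u, v) := by
  have swap_preserving : MeasurePreserving (Prod.swap : ℝ × ℝ → ℝ × ℝ) :=
    Measure.measurePreserving_swap
  have swap_embedding : MeasurableEmbedding (Prod.swap : ℝ × ℝ → ℝ × ℝ) :=
    MeasurableEquiv.prodComm.measurableEmbedding
  rw [← swap_preserving.setIntegral_preimage_emb swap_embedding, preimage_swap_timeTriangle]
  refine setIntegral_timeTriangle hS ?_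
  rwa [← swap_preserving.integrableOn_comp_preimage swap_embedding,
    preimage_swap_timeTriangle] at hφ

lemma setIntegral_timeTriangle_antidiagonal {S : ℝ} (hS : 0 ≤ S) {φ : ℝ × ℝ → E}
    (hφ : IntegrableOn φ (timeTriangle S)) :
    ∫ p in timeTriangle S, φ p = ∫ T in (0 : ℝ)..S, ∫ t in (0 : ℝ)..T, φ (t, T - t) := by
  let shear : ℝ × ℝ → ℝ × ℝ := fun p => (p.2, p.1 - p.2)
  have shear_preserving : MeasurePreserving shear := measurePreserving_prod_sub_swap volume volume
  have shear_embedding : MeasurableEmbedding shear := by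
    refine shear_preserving.measurable.measurableEmbedding fun p q hpq => ?_
    obtain ⟨h₁, h₂⟩ := Prod.ext_iff.1 hpq
    exact Prod.ext (by simp only [shear] at h₁ h₂; linarith) h₁
  have fst_mem : ∀ p ∈ shear ⁻¹' timeTriangle S, p.1 ∈ Ioc 0 S := by
    rintro ⟨T, t⟩ ⟨h₁, h₂, h₃⟩
    simp only [shear] at h₁ h₂ h₃
    exact ⟨by linarith, by linarith⟩
  rw [← shear_preserving.integrableOn_comp_preimage shear_embedding] at hφ
  rw [← shear_preserving.setIntegral_preimage_emb shear_embedding, Measure.volume_eq_prod,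
    setIntegral_eq_integral_integral_preimage_prodMk (f := fun p => φ (shear p))
      (shear_preserving.measurable (measurableSet_timeTriangle S)) fst_mem hφ,
    intervalIntegral.integral_of_le hS]
  refine setIntegral_congr_fun measurableSet_Ioc fun T hT => ?_
  have section_eq : Prod.mk T ⁻¹' (shear ⁻¹' timeTriangle S) = Ioo 0 T := by
    ext t
    simp only [timeTriangle, shear, mem_preimage, mem_ofPred_eq, mem_Ioo, sub_pos,
      add_sub_cancel, hT.2, and_true]
  simp only [section_eq, shear, intervalIntegral.integral_of_le hT.1.le,
    integral_Ioc_eq_integral_Ioo]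

lemma integral_legs_sub_eq_setIntegral_timeTriangle_sub {S : ℝ} (hS : 0 ≤ S)
    {F φ₁ φ₂ : ℝ × ℝ → E}
    (hF_fst : IntervalIntegrable (fun t => F (t, 0)) volume 0 S)
    (hF_snd : IntervalIntegrable (fun t => F (0, t)) volume 0 S)
    (hF_hyp : IntervalIntegrable (fun t => F (t, S - t)) volume 0 S)
    (hφ₁ : IntegrableOn φ₁ (timeTriangle S)) (hφ₂ : IntegrableOn φ₂ (timeTriangle S))
    (hFφ₁ : ∀ᵐ v ∂volume.restrict (Ioc 0 S),
      F (S - v, v) - F (0, v) = ∫ u in (0 : ℝ)..(S - v), φ₁ (u, v))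
    (hFφ₂ : ∀ᵐ u ∂volume.restrict (Ioc 0 S),
      F (u, S - u) - F (u, 0) = ∫ v in (0 : ℝ)..(S - u), φ₂ (u, v)) :
    ∫ T in (0 : ℝ)..S, (F (T, 0) - F (0, T))
      = (∫ p in timeTriangle S, φ₁ p) - ∫ p in timeTriangle S, φ₂ p := by
  have hypotenuse_reversed : ∫ v in (0 : ℝ)..S, F (S - v, v) = ∫ u in (0 : ℝ)..S, F (u, S - u) := by
    simpa using intervalIntegral.integral_comp_sub_left (a := 0) (b := S) (fun u => F (u, S - u)) S
  have hF_hyp_rev : IntervalIntegrable (fun v => F (S - v, v)) volume 0 S := by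
    simpa using (hF_hyp.comp_sub_left S).symm
  have triangle₁ : ∫ p in timeTriangle S, φ₁ p
      = (∫ u in (0 : ℝ)..S, F (u, S - u)) - ∫ v in (0 : ℝ)..S, F (0, v) := by
    rw [setIntegral_timeTriangle_symm hS hφ₁, ← hypotenuse_reversed,
      ← intervalIntegral.integral_sub hF_hyp_rev hF_snd]
    simp only [intervalIntegral.integral_of_le hS]
    exact (integral_congr_ae hFφ₁).symm
  have triangle₂ : ∫ p in timeTriangle S, φ₂ p
      = (∫ u in (0 : ℝ)..S, F (u, S - u)) - ∫ u in (0 : ℝ)..S, F (u, 0) := by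
    rw [setIntegral_timeTriangle hS hφ₂, ← intervalIntegral.integral_sub hF_hyp hF_fst]
    simp only [intervalIntegral.integral_of_le hS]
    exact (integral_congr_ae hFφ₂).symm
  rw [triangle₁, triangle₂, intervalIntegral.integral_sub hF_fst hF_snd]
  abel

end TriangleIntegrals

lemma measurable_of_continuousWithinAt_Ici {Ω E : Type*} [MeasurableSpace Ω] [TopologicalSpace E]
    [TopologicalSpace.PseudoMetrizableSpace E] [MeasurableSpace E] [BorelSpace E] {X : ℝ → Ω → E}
    (hX : ∀ t, 0 ≤ t → Measurable (X t))
    (hrc : ∀ ω, ∀ t : ℝ, 0 ≤ t → ContinuousWithinAt (fun s => X s ω) (Ici t) t) :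
    Measurable fun p : ℝ≥0 × Ω => X p.1 p.2 := by
  let gridTime (n k : ℕ) : ℝ := k / (n + 1 : ℕ)
  let nextIndex (n : ℕ) (t : ℝ≥0) : ℕ := ⌈(t : ℝ) * (n + 1 : ℕ)⌉₊
  have measurable_grid (n : ℕ) :
      Measurable fun p : ℝ≥0 × Ω => X (gridTime n (nextIndex n p.1)) p.2 := by
    have on_grid : Measurable fun q : ℕ × Ω => X (gridTime n q.1) q.2 :=
      measurable_from_prod_countable_right fun k =>
        hX _ (div_nonneg k.cast_nonneg (n + 1).cast_nonneg)
    have measurable_nextIndex : Measurable fun t => nextIndex n t :=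
      Measurable.nat_ceil (by fun_prop)
    exact on_grid.comp ((measurable_nextIndex.comp measurable_fst).prodMk measurable_snd)
  refine measurable_of_tendsto_metrizable measurable_grid (tendsto_pi_nhds.2 fun ⟨t, ω⟩ => ?_)
  have tendsto_gridTime : Tendsto (fun n => gridTime n (nextIndex n t)) atTop (nhds t) :=
    (tendsto_nat_ceil_mul_div_atTop (R := ℝ) t.2).comp
      (tendsto_natCast_atTop_atTop.comp (tendsto_add_atTop_nat 1))
  have le_gridTime (n : ℕ) : (t : ℝ) ≤ gridTime n (nextIndex n t) :=
    (le_div_iff₀ (by positivity)).2 (Nat.le_ceil _)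
  exact (hrc ω t t.2).tendsto.comp
    (tendsto_nhdsWithin_iff.2 ⟨tendsto_gridTime, .of_forall le_gridTime⟩)

lemma aemeasurable_comp_of_ae_nonneg {α Ω E : Type*} [MeasurableSpace α] [MeasurableSpace Ω]
    [MeasurableSpace E] {X : ℝ → Ω → E} (hX : Measurable fun p : ℝ≥0 × Ω => X p.1 p.2)
    {μ : Measure α} {τ : α → ℝ} (hτ : Measurable τ) (hτ_nonneg : ∀ᵐ a ∂μ, 0 ≤ τ a)
    {π : α → Ω} (hπ : Measurable π) : AEMeasurable (fun a => X (τ a) (π a)) μ := by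
  refine ⟨fun a => X (τ a).toNNReal (π a), hX.comp (hτ.real_toNNReal.prodMk hπ), ?_⟩
  filter_upwards [hτ_nonneg] with a ha
  rw [Real.coe_toNNReal _ ha]

lemma measurable_of_nonneg {Ω E : Type*} [MeasurableSpace Ω] [MeasurableSpace E] {X : ℝ → Ω → E}
    (hX : Measurable fun p : ℝ≥0 × Ω => X p.1 p.2) {t : ℝ} (ht : 0 ≤ t) : Measurable (X t) :=
  hX.comp (measurable_prodMk_left (x := (⟨t, ht⟩ : ℝ≥0)))

section IndependentPair

variable {Ω E₁ E₂ : Type*} [MeasurableSpace Ω] [MeasurableSpace E₁] [MeasurableSpace E₂]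
  {P : Measure Ω} [IsFiniteMeasure P] {Y : Ω → E₁} {Z : Ω → E₂}

lemma lintegral_comp_prodMk_of_indepFun (hY : Measurable Y) (hZ : Measurable Z)
    (hYZ : IndepFun Y Z P) {g : E₁ × E₂ → ℝ≥0∞} (hg : Measurable g) :
    ∫⁻ ω, g (Y ω, Z ω) ∂P = ∫⁻ z, ∫⁻ ω, g (Y ω, z) ∂P ∂P.map Z := by
  have law_prod := (indepFun_iff_map_prod_eq_prod_map_map hY.aemeasurable hZ.aemeasurable).1 hYZ
  rw [← lintegral_map hg (hY.prodMk hZ), law_prod, lintegral_prod_symm' _ hg]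
  exact lintegral_congr fun z => lintegral_map (hg.comp measurable_prodMk_right) hY

lemma integral_comp_prodMk_of_indepFun_s2 {G : Type*} [NormedAddCommGroup G] [NormedSpace ℝ G]
    (hY : Measurable Y) (hZ : Measurable Z) (hYZ : IndepFun Y Z P)
    {g : E₁ × E₂ → G} (hg : StronglyMeasurable g)
    (hgYZ : Integrable (fun ω => g (Y ω, Z ω)) P) :
    Integrable (fun z => ∫ ω, g (Y ω, z) ∂P) (P.map Z) ∧
      ∫ ω, g (Y ω, Z ω) ∂P = ∫ z, ∫ ω, g (Y ω, z) ∂P ∂P.map Z := by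
  have law_prod := (indepFun_iff_map_prod_eq_prod_map_map hY.aemeasurable hZ.aemeasurable).1 hYZ
  have hg_law : Integrable g ((P.map Y).prod (P.map Z)) := by
    rw [← law_prod]
    exact (integrable_map_measure hg.aestronglyMeasurable (hY.prodMk hZ).aemeasurable).2 hgYZ
  have integral_law (z : E₂) : ∫ y, g (y, z) ∂P.map Y = ∫ ω, g (Y ω, z) ∂P :=
    integral_map hY.aemeasurable (hg.comp_measurable measurable_prodMk_right).aestronglyMeasurable
  constructor
  · simpa only [integral_law] using hg_law.integral_prod_right
  · rw [← integral_map (hY.prodMk hZ).aemeasurable hg.aestronglyMeasurable, law_prod,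
      integral_prod_symm _ hg_law]
    simp only [integral_law]

end IndependentPair

section Dynkin

variable {Ω E E₁ E₂ G : Type*} [MeasurableSpace Ω] [MeasurableSpace E] [MeasurableSpace E₁]
  [MeasurableSpace E₂] [NormedAddCommGroup G] {P : Measure Ω}

lemma ae_restrict_Ioc_prod_fst_nonneg {β : Type*} [MeasurableSpace β] (T : ℝ) (ν : Measure β) :
    ∀ᵐ p ∂(volume.restrict (Ioc 0 T)).prod ν, 0 ≤ p.1 :=
  Measure.quasiMeasurePreserving_fst.ae
    (ae_restrict_of_forall_mem measurableSet_Ioc fun _ ht => ht.1.le)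

lemma integrable_comp_of_lintegral_lt_top [SFinite P]
    {X : ℝ → Ω → E} (hX : Measurable fun p : ℝ≥0 × Ω => X p.1 p.2)
    {φ : E → G} (hφ : StronglyMeasurable φ) {T : ℝ}
    (hφ_fin : ∫⁻ s in Ioc 0 T, ∫⁻ ω, ‖φ (X s ω)‖ₑ ∂P < ⊤) :
    Integrable (fun p : ℝ × Ω => φ (X p.1 p.2)) ((volume.restrict (Ioc 0 T)).prod P) := by
  have hφX : AEStronglyMeasurable (fun p : ℝ × Ω => φ (X p.1 p.2))
      ((volume.restrict (Ioc 0 T)).prod P) :=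
    hφ.aestronglyMeasurable.comp_aemeasurable <| aemeasurable_comp_of_ae_nonneg hX
      measurable_fst (ae_restrict_Ioc_prod_fst_nonneg T P) measurable_snd
  refine ⟨hφX, ?_⟩
  rwa [HasFiniteIntegral, lintegral_prod _ hφX.enorm]

variable [NormedSpace ℝ G]

/-- Dynkin's formula at time `T`: the mean of `ψ (X t)` has derivative the mean of `φ (X t)`, in
integrated form. This is all that the proof needs from a martingale problem sending `ψ` to `φ`. -/
def DynkinFormula (P : Measure Ω) (X : ℝ → Ω → E) (ψ φ : E → G) (T : ℝ) : Prop :=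
  (∫ ω, ψ (X T ω) ∂P) - ∫ ω, ψ (X 0 ω) ∂P = ∫ s in (0 : ℝ)..T, ∫ ω, φ (X s ω) ∂P

lemma dynkinFormula_of_martingale [CompleteSpace G] [IsFiniteMeasure P]
    {X : ℝ → Ω → E} (hX : Measurable fun p : ℝ≥0 × Ω => X p.1 p.2)
    {ψ φ : E → G} (hφ : StronglyMeasurable φ) {T : ℝ} (hT : 0 ≤ T)
    (hφ_fin : ∫⁻ s in Ioc 0 T, ∫⁻ ω, ‖φ (X s ω)‖ₑ ∂P < ⊤)
    {ℱ : Filtration ℝ≥0 ‹MeasurableSpace Ω›}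
    (hM : Martingale (fun (t : ℝ≥0) ω => ψ (X t ω) - ∫ s in (0 : ℝ)..t, φ (X s ω)) ℱ P) :
    DynkinFormula P X ψ φ T := by
  have hφX := integrable_comp_of_lintegral_lt_top hX hφ hφ_fin
  lift T to ℝ≥0 using hT
  have mean_eq := hM.setIntegral_eq (zero_le (a := T)) MeasurableSet.univ
  have hψX : Integrable (fun ω => ψ (X T ω)) P := by
    have hφX_drift : Integrable (fun ω => ∫ s in (0 : ℝ)..T, φ (X s ω)) P := by
      simpa only [intervalIntegral.integral_of_le T.coe_nonneg] using hφX.integral_prod_right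
    simpa only [Pi.add_def, sub_add_cancel] using (hM.integrable T).add hφX_drift
  simp only [Measure.restrict_univ, NNReal.coe_zero, intervalIntegral.integral_same, sub_zero,
    intervalIntegral.integral_of_le T.coe_nonneg] at mean_eq
  rw [DynkinFormula, mean_eq, integral_sub hψX hφX.integral_prod_right, sub_sub_cancel,
    intervalIntegral.integral_of_le T.coe_nonneg,
    integral_integral_swap (f := fun s ω => φ (X s ω)) hφX]

lemma integrable_integral_of_indepFun [IsFiniteMeasure P]
    {Y : ℝ → Ω → E₁} (hY : Measurable fun p : ℝ≥0 × Ω => Y p.1 p.2)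
    {Z : Ω → E₂} (hZ : Measurable Z) (hYZ : ∀ t, 0 ≤ t → IndepFun (Y t) Z P)
    {Φ : E₁ × E₂ → G} (hΦ : StronglyMeasurable Φ) {T : ℝ}
    (hΦ_fin : ∫⁻ s in Ioc 0 T, ∫⁻ ω, ‖Φ (Y s ω, Z ω)‖ₑ ∂P < ⊤) :
    Integrable (fun p : ℝ × E₂ => ∫ ω, Φ (Y p.1 ω, p.2) ∂P)
      ((volume.restrict (Ioc 0 T)).prod (P.map Z)) := by
  have hYq : AEMeasurable (fun q : (ℝ × E₂) × Ω => Y q.1.1 q.2)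
      (((volume.restrict (Ioc 0 T)).prod (P.map Z)).prod P) :=
    aemeasurable_comp_of_ae_nonneg hY (measurable_fst.comp measurable_fst)
      (Measure.quasiMeasurePreserving_fst.ae (ae_restrict_Ioc_prod_fst_nonneg T (P.map Z)))
      measurable_snd
  have mean_meas : AEStronglyMeasurable (fun p : ℝ × E₂ => ∫ ω, Φ (Y p.1 ω, p.2) ∂P)
      ((volume.restrict (Ioc 0 T)).prod (P.map Z)) :=
    (hΦ.aestronglyMeasurable.comp_aemeasurable
      (hYq.prodMk (measurable_snd.comp measurable_fst).aemeasurable)).integral_prod_right'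
  refine ⟨mean_meas, ?_⟩
  rw [HasFiniteIntegral, lintegral_prod _ mean_meas.enorm]
  calc ∫⁻ s in Ioc 0 T, ∫⁻ z, ‖∫ ω, Φ (Y s ω, z) ∂P‖ₑ ∂P.map Z
      ≤ ∫⁻ s in Ioc 0 T, ∫⁻ z, ∫⁻ ω, ‖Φ (Y s ω, z)‖ₑ ∂P ∂P.map Z :=
        lintegral_mono fun s => lintegral_mono fun z => enorm_integral_le_lintegral_enorm _
    _ = ∫⁻ s in Ioc 0 T, ∫⁻ ω, ‖Φ (Y s ω, Z ω)‖ₑ ∂P :=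
        setLIntegral_congr_fun measurableSet_Ioc fun s hs =>
          (lintegral_comp_prodMk_of_indepFun (measurable_of_nonneg hY hs.1.le) hZ (hYZ s hs.1.le)
            hΦ.enorm).symm
    _ < ⊤ := hΦ_fin

lemma dynkinFormula_prodMk_of_indepFun [IsFiniteMeasure P]
    {Y : ℝ → Ω → E₁} (hY : Measurable fun p : ℝ≥0 × Ω => Y p.1 p.2)
    {Z : Ω → E₂} (hZ : Measurable Z) (hYZ : ∀ t, 0 ≤ t → IndepFun (Y t) Z P)
    {Ψ Φ : E₁ × E₂ → G} (hΨ : StronglyMeasurable Ψ) (hΦ : StronglyMeasurable Φ)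
    {T : ℝ} (hT : 0 ≤ T) (hΨ_int : ∀ t, 0 ≤ t → Integrable (fun ω => Ψ (Y t ω, Z ω)) P)
    (hΦ_fin : ∫⁻ s in Ioc 0 T, ∫⁻ ω, ‖Φ (Y s ω, Z ω)‖ₑ ∂P < ⊤)
    (hDynkin : ∀ z, DynkinFormula P Y (fun y => Ψ (y, z)) (fun y => Φ (y, z)) T) :
    DynkinFormula P (fun t ω => (Y t ω, Z ω)) Ψ Φ T := by
  have disintegrate (t : ℝ) (ht : 0 ≤ t) {g : E₁ × E₂ → G} (hg : StronglyMeasurable g) :=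
    integral_comp_prodMk_of_indepFun_s2 (measurable_of_nonneg hY ht) hZ (hYZ t ht) hg
  obtain ⟨hΨT, hΨT_eq⟩ := disintegrate T hT hΨ (hΨ_int T hT)
  obtain ⟨hΨ0, hΨ0_eq⟩ := disintegrate 0 le_rfl hΨ (hΨ_int 0 le_rfl)
  have hΦYZ : Integrable (fun p : ℝ × Ω => Φ (Y p.1 p.2, Z p.2))
      ((volume.restrict (Ioc 0 T)).prod P) :=
    integrable_comp_of_lintegral_lt_top (X := fun t ω => (Y t ω, Z ω))
      (hY.prodMk (hZ.comp measurable_snd)) hΦ hΦ_fin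
  have hΦ_mean := integrable_integral_of_indepFun hY hZ hYZ hΦ hΦ_fin
  calc (∫ ω, Ψ (Y T ω, Z ω) ∂P) - ∫ ω, Ψ (Y 0 ω, Z ω) ∂P
      = ∫ z, ((∫ ω, Ψ (Y T ω, z) ∂P) - ∫ ω, Ψ (Y 0 ω, z) ∂P) ∂P.map Z := by
        rw [hΨT_eq, hΨ0_eq, integral_sub hΨT hΨ0]
    _ = ∫ z, (∫ s in (0 : ℝ)..T, ∫ ω, Φ (Y s ω, z) ∂P) ∂P.map Z :=
        integral_congr_ae (.of_forall hDynkin)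
    _ = ∫ s in (0 : ℝ)..T, ∫ z, ∫ ω, Φ (Y s ω, z) ∂P ∂P.map Z := by
        refine (intervalIntegral_integral_swap ?_).symm
        rwa [uIoc_of_le hT]
    _ = ∫ s in (0 : ℝ)..T, ∫ ω, Φ (Y s ω, Z ω) ∂P := by
        simp only [intervalIntegral.integral_of_le hT]
        refine integral_congr_ae ?_
        filter_upwards [hΦYZ.prod_right_ae, ae_restrict_mem measurableSet_Ioc] with s hs_int hs
        exact (disintegrate s hs.1.le hΦ hs_int).2.symm

end Dynkin

section PairMean

variable {Ω E₁ E₂ G : Type*} [MeasurableSpace Ω] [NormedAddCommGroup G] {P : Measure Ω}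
  {X₁ : ℝ → Ω → E₁} {X₂ : ℝ → Ω → E₂}

/-- The mean of `g (X₁ s, X₂ t)` as a function of the pair of times `(s, t)`. -/
noncomputable def pairMean [NormedSpace ℝ G] (P : Measure Ω) (g : E₁ × E₂ → G) (X₁ : ℝ → Ω → E₁)
    (X₂ : ℝ → Ω → E₂) (p : ℝ × ℝ) : G :=
  ∫ ω, g (X₁ p.1 ω, X₂ p.2 ω) ∂P

lemma setIntegral_pairMean_sub [NormedSpace ℝ G] [SFinite P] {S : ℝ} (hS : 0 ≤ S)
    {g₁ g₂ : E₁ × E₂ → G}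
    (hg₁ : Integrable (fun q : (ℝ × ℝ) × Ω => g₁ (X₁ q.1.1 q.2, X₂ q.1.2 q.2))
      ((volume.restrict (timeTriangle S)).prod P))
    (hg₂ : Integrable (fun q : (ℝ × ℝ) × Ω => g₂ (X₁ q.1.1 q.2, X₂ q.1.2 q.2))
      ((volume.restrict (timeTriangle S)).prod P)) :
    (∫ p in timeTriangle S, pairMean P g₁ X₁ X₂ p) - ∫ p in timeTriangle S, pairMean P g₂ X₁ X₂ p
      = ∫ T in (0 : ℝ)..S, ∫ t in (0 : ℝ)..T, pairMean P (g₁ - g₂) X₁ X₂ (t, T - t) := by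
  have pairMean_sub : ∀ᵐ p ∂volume.restrict (timeTriangle S),
      pairMean P g₁ X₁ X₂ p - pairMean P g₂ X₁ X₂ p = pairMean P (g₁ - g₂) X₁ X₂ p := by
    filter_upwards [hg₁.prod_right_ae, hg₂.prod_right_ae] with p hp₁ hp₂
    exact (integral_sub hp₁ hp₂).symm
  have hg_sub : IntegrableOn (pairMean P (g₁ - g₂) X₁ X₂) (timeTriangle S) :=
    (hg₁.sub hg₂).integral_prod_left
  rw [← setIntegral_timeTriangle_antidiagonal hS hg_sub, ← integral_congr_ae pairMean_sub]
  exact (integral_sub hg₁.integral_prod_left hg₂.integral_prod_left).symm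

variable [MeasurableSpace E₁] [MeasurableSpace E₂]

lemma aestronglyMeasurable_comp_prodMk [SFinite P]
    (hX₁ : Measurable fun p : ℝ≥0 × Ω => X₁ p.1 p.2)
    (hX₂ : Measurable fun p : ℝ≥0 × Ω => X₂ p.1 p.2)
    {g : E₁ × E₂ → G} (hg : StronglyMeasurable g)
    {α : Type*} [MeasurableSpace α] {μ : Measure α} {τ₁ τ₂ : α → ℝ}
    (hτ₁ : Measurable τ₁) (hτ₂ : Measurable τ₂)
    (hτ₁_nonneg : ∀ᵐ a ∂μ, 0 ≤ τ₁ a) (hτ₂_nonneg : ∀ᵐ a ∂μ, 0 ≤ τ₂ a) :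
    AEStronglyMeasurable (fun q : α × Ω => g (X₁ (τ₁ q.1) q.2, X₂ (τ₂ q.1) q.2)) (μ.prod P) := by
  have hX₁τ : AEMeasurable (fun q : α × Ω => X₁ (τ₁ q.1) q.2) (μ.prod P) :=
    aemeasurable_comp_of_ae_nonneg hX₁ (hτ₁.comp measurable_fst)
      (Measure.quasiMeasurePreserving_fst.ae hτ₁_nonneg) measurable_snd
  have hX₂τ : AEMeasurable (fun q : α × Ω => X₂ (τ₂ q.1) q.2) (μ.prod P) :=
    aemeasurable_comp_of_ae_nonneg hX₂ (hτ₂.comp measurable_fst)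
      (Measure.quasiMeasurePreserving_fst.ae hτ₂_nonneg) measurable_snd
  exact hg.aestronglyMeasurable.comp_aemeasurable (hX₁τ.prodMk hX₂τ)

lemma intervalIntegrable_pairMean [NormedSpace ℝ G] [IsFiniteMeasure P]
    (hX₁ : Measurable fun p : ℝ≥0 × Ω => X₁ p.1 p.2)
    (hX₂ : Measurable fun p : ℝ≥0 × Ω => X₂ p.1 p.2)
    {g : E₁ × E₂ → G} (hg : StronglyMeasurable g) {C : ℝ} (hgC : ∀ x, ‖g x‖ ≤ C)
    {S : ℝ} (hS : 0 ≤ S) {τ₁ τ₂ : ℝ → ℝ} (hτ₁ : Measurable τ₁) (hτ₂ : Measurable τ₂)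
    (hτ₁_nonneg : ∀ t ∈ Ioc 0 S, 0 ≤ τ₁ t) (hτ₂_nonneg : ∀ t ∈ Ioc 0 S, 0 ≤ τ₂ t) :
    IntervalIntegrable (fun t => pairMean P g X₁ X₂ (τ₁ t, τ₂ t)) volume 0 S := by
  rw [intervalIntegrable_iff_integrableOn_Ioc_of_le hS]
  have pairMean_meas := (aestronglyMeasurable_comp_prodMk (P := P) hX₁ hX₂ hg hτ₁ hτ₂
    (μ := volume.restrict (Ioc 0 S))
    (ae_restrict_of_forall_mem measurableSet_Ioc hτ₁_nonneg)
    (ae_restrict_of_forall_mem measurableSet_Ioc hτ₂_nonneg)).integral_prod_right'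
  exact Integrable.of_bound pairMean_meas (C * P.real univ)
    (.of_forall fun t => norm_integral_le_of_norm_le_const (.of_forall fun ω => hgC _))

lemma aestronglyMeasurable_comp_square [SFinite P]
    (hX₁ : Measurable fun p : ℝ≥0 × Ω => X₁ p.1 p.2)
    (hX₂ : Measurable fun p : ℝ≥0 × Ω => X₂ p.1 p.2)
    {g : E₁ × E₂ → G} (hg : StronglyMeasurable g) (S : ℝ) :
    AEStronglyMeasurable (fun q : (ℝ × ℝ) × Ω => g (X₁ q.1.1 q.2, X₂ q.1.2 q.2))
      (((volume.restrict (Ioc 0 S)).prod (volume.restrict (Ioc 0 S))).prod P) := by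
  have nonneg : ∀ᵐ t ∂volume.restrict (Ioc 0 S), 0 ≤ t :=
    ae_restrict_of_forall_mem measurableSet_Ioc fun _ ht => ht.1.le
  exact aestronglyMeasurable_comp_prodMk hX₁ hX₂ hg measurable_fst measurable_snd
    (Measure.quasiMeasurePreserving_fst.ae nonneg) (Measure.quasiMeasurePreserving_snd.ae nonneg)

lemma integrable_comp_timeTriangle [SFinite P]
    (hX₁ : Measurable fun p : ℝ≥0 × Ω => X₁ p.1 p.2)
    (hX₂ : Measurable fun p : ℝ≥0 × Ω => X₂ p.1 p.2)
    {g : E₁ × E₂ → G} (hg : StronglyMeasurable g) {S : ℝ}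
    (hg_fin : ∫⁻ s in Ioc 0 S, ∫⁻ t in Ioc 0 S, ∫⁻ ω, ‖g (X₁ s ω, X₂ t ω)‖ₑ ∂P < ⊤) :
    Integrable (fun q : (ℝ × ℝ) × Ω => g (X₁ q.1.1 q.2, X₂ q.1.2 q.2))
      ((volume.restrict (timeTriangle S)).prod P) := by
  have square_meas := aestronglyMeasurable_comp_square (P := P) hX₁ hX₂ hg S
  have square_int : Integrable (fun q : (ℝ × ℝ) × Ω => g (X₁ q.1.1 q.2, X₂ q.1.2 q.2))
      (((volume.restrict (Ioc 0 S)).prod (volume.restrict (Ioc 0 S))).prod P) := by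
    refine ⟨square_meas, ?_⟩
    rw [HasFiniteIntegral, lintegral_prod _ square_meas.enorm,
      lintegral_prod _ square_meas.enorm.lintegral_prod_right']
    exact hg_fin
  refine square_int.mono_measure (Measure.prod_mono ?_ le_rfl)
  rw [Measure.prod_restrict, ← Measure.volume_eq_prod]
  exact Measure.restrict_mono_set volume (timeTriangle_subset_Ioc_prod_Ioc S)

lemma ae_pairMean_sub_eq_integral_pairMean [NormedSpace ℝ G] [IsFiniteMeasure P]
    (hX₁ : Measurable fun p : ℝ≥0 × Ω => X₁ p.1 p.2)
    (hX₂ : Measurable fun p : ℝ≥0 × Ω => X₂ p.1 p.2)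
    (hindep : ∀ s t, 0 ≤ s → 0 ≤ t → IndepFun (X₁ s) (X₂ t) P)
    {Ψ Φ : E₁ × E₂ → G} (hΨ : StronglyMeasurable Ψ) {C : ℝ} (hΨC : ∀ x, ‖Ψ x‖ ≤ C)
    (hΦ : StronglyMeasurable Φ)
    (hDynkin : ∀ z T, 0 ≤ T →
      DynkinFormula P X₁ (fun y => Ψ (y, z)) (fun y => Φ (y, z)) T) {S : ℝ}
    (hΦ_fin : ∫⁻ t in Ioc 0 S, ∫⁻ s in Ioc 0 S, ∫⁻ ω, ‖Φ (X₁ s ω, X₂ t ω)‖ₑ ∂P < ⊤) :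
    ∀ᵐ v ∂volume.restrict (Ioc 0 S), pairMean P Ψ X₁ X₂ (S - v, v) - pairMean P Ψ X₁ X₂ (0, v)
      = ∫ u in (0 : ℝ)..(S - v), pairMean P Φ X₁ X₂ (u, v) := by
  have fibre_meas : AEMeasurable (fun t => ∫⁻ s in Ioc 0 S, ∫⁻ ω, ‖Φ (X₁ s ω, X₂ t ω)‖ₑ ∂P)
      (volume.restrict (Ioc 0 S)) :=
    (aestronglyMeasurable_comp_square hX₁ hX₂ hΦ S).enorm.lintegral_prod_right'.lintegral_prod_left'
  filter_upwards [ae_lt_top' fibre_meas hΦ_fin.ne, ae_restrict_mem measurableSet_Ioc]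
    with v hv_fin hv
  have hX₂v : Measurable (X₂ v) := measurable_of_nonneg hX₂ hv.1.le
  refine dynkinFormula_prodMk_of_indepFun hX₁ hX₂v (fun t ht => hindep t v ht hv.1.le) hΨ hΦ
    (sub_nonneg.2 hv.2) (fun t ht => ?_) ?_ fun z => hDynkin z _ (sub_nonneg.2 hv.2)
  · have hX_pair : Measurable fun ω => (X₁ t ω, X₂ v ω) := (measurable_of_nonneg hX₁ ht).prodMk hX₂v
    exact .of_bound (hΨ.comp_measurable hX_pair).aestronglyMeasurable C (.of_forall fun _ => hΨC _)
  · exact (lintegral_mono_set (Ioc_subset_Ioc_right (sub_le_self S hv.1.le))).trans_lt hv_fin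

end PairMean

theorem integrated_duality_general {Ω E₁ E₂ G : Type*} [MeasurableSpace Ω] [MeasurableSpace E₁]
    [MeasurableSpace E₂] [NormedAddCommGroup G] [NormedSpace ℝ G] [CompleteSpace G]
    {P : Measure Ω} [IsFiniteMeasure P] {X₁ : ℝ → Ω → E₁} {X₂ : ℝ → Ω → E₂}
    (hX₁ : Measurable fun p : ℝ≥0 × Ω => X₁ p.1 p.2)
    (hX₂ : Measurable fun p : ℝ≥0 × Ω => X₂ p.1 p.2)
    (hindep : ∀ s t, 0 ≤ s → 0 ≤ t → IndepFun (X₁ s) (X₂ t) P)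
    {Ψ Φ₁ Φ₂ : E₁ × E₂ → G} (hΨ : StronglyMeasurable Ψ) {C : ℝ} (hΨC : ∀ x, ‖Ψ x‖ ≤ C)
    (hΦ₁ : StronglyMeasurable Φ₁) (hΦ₂ : StronglyMeasurable Φ₂)
    (hΦ₁_int : ∀ x₂ t, 0 ≤ t → ∫⁻ s in Ioc 0 t, ∫⁻ ω, ‖Φ₁ (X₁ s ω, x₂)‖ₑ ∂P < ⊤)
    {ℱ₁ : Filtration ℝ≥0 ‹MeasurableSpace Ω›}
    (hM₁ : ∀ x₂, Martingale (fun (t : ℝ≥0) ω =>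
      Ψ (X₁ t ω, x₂) - ∫ s in (0 : ℝ)..t, Φ₁ (X₁ s ω, x₂)) ℱ₁ P)
    (hΦ₂_int : ∀ x₁ t, 0 ≤ t → ∫⁻ s in Ioc 0 t, ∫⁻ ω, ‖Φ₂ (x₁, X₂ s ω)‖ₑ ∂P < ⊤)
    {ℱ₂ : Filtration ℝ≥0 ‹MeasurableSpace Ω›}
    (hM₂ : ∀ x₁, Martingale (fun (t : ℝ≥0) ω =>
      Ψ (x₁, X₂ t ω) - ∫ s in (0 : ℝ)..t, Φ₂ (x₁, X₂ s ω)) ℱ₂ P)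
    {S : ℝ} (hS : 0 ≤ S)
    (hΦ₁_fin : ∫⁻ s in Ioc 0 S, ∫⁻ t in Ioc 0 S, ∫⁻ ω, ‖Φ₁ (X₁ s ω, X₂ t ω)‖ₑ ∂P < ⊤)
    (hΦ₂_fin : ∫⁻ s in Ioc 0 S, ∫⁻ t in Ioc 0 S, ∫⁻ ω, ‖Φ₂ (X₁ s ω, X₂ t ω)‖ₑ ∂P < ⊤) :
    ∫ T in (0 : ℝ)..S, ((∫ ω, Ψ (X₁ T ω, X₂ 0 ω) ∂P) - ∫ ω, Ψ (X₁ 0 ω, X₂ T ω) ∂P)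
      = ∫ T in (0 : ℝ)..S, ∫ t in (0 : ℝ)..T,
          ∫ ω, (Φ₁ (X₁ t ω, X₂ (T - t) ω) - Φ₂ (X₁ t ω, X₂ (T - t) ω)) ∂P := by
  have hΦ₁_fin_swap :
      ∫⁻ t in Ioc 0 S, ∫⁻ s in Ioc 0 S, ∫⁻ ω, ‖Φ₁ (X₁ s ω, X₂ t ω)‖ₑ ∂P < ⊤ := by
    rwa [lintegral_lintegral_swap
      (aestronglyMeasurable_comp_square hX₁ hX₂ hΦ₁ S).enorm.lintegral_prod_right'] at hΦ₁_fin
  have dynkin₁ (x₂ : E₂) (T : ℝ) (hT : 0 ≤ T) :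
      DynkinFormula P X₁ (fun x₁ => Ψ (x₁, x₂)) (fun x₁ => Φ₁ (x₁, x₂)) T :=
    dynkinFormula_of_martingale hX₁ (hΦ₁.comp_measurable measurable_prodMk_right) hT
      (hΦ₁_int x₂ T hT) (hM₁ x₂)
  have dynkin₂ (x₁ : E₁) (T : ℝ) (hT : 0 ≤ T) :
      DynkinFormula P X₂ (fun x₂ => Ψ (x₁, x₂)) (fun x₂ => Φ₂ (x₁, x₂)) T :=
    dynkinFormula_of_martingale hX₂ (hΦ₂.comp_measurable measurable_prodMk_left) hT
      (hΦ₂_int x₁ T hT) (hM₂ x₁)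
  have increments₁ := ae_pairMean_sub_eq_integral_pairMean hX₁ hX₂ hindep hΨ hΨC hΦ₁ dynkin₁
    hΦ₁_fin_swap
  have increments₂ := ae_pairMean_sub_eq_integral_pairMean (Ψ := Ψ ∘ Prod.swap)
    (Φ := Φ₂ ∘ Prod.swap) hX₂ hX₁ (fun s t hs ht => (hindep t s ht hs).symm)
    (hΨ.comp_measurable measurable_swap) (fun _ => hΨC _) (hΦ₂.comp_measurable measurable_swap)
    dynkin₂ hΦ₂_fin
  have Ψ_intervalIntegrable {τ₁ τ₂ : ℝ → ℝ} :=
    intervalIntegrable_pairMean (P := P) (τ₁ := τ₁) (τ₂ := τ₂) hX₁ hX₂ hΨ hΨC hS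
  have hΦ₁X := integrable_comp_timeTriangle hX₁ hX₂ hΦ₁ hΦ₁_fin
  have hΦ₂X := integrable_comp_timeTriangle hX₁ hX₂ hΦ₂ hΦ₂_fin
  exact (integral_legs_sub_eq_setIntegral_timeTriangle_sub hS
    (Ψ_intervalIntegrable measurable_id measurable_const (fun t ht => ht.1.le) fun _ _ => le_rfl)
    (Ψ_intervalIntegrable measurable_const measurable_id (fun _ _ => le_rfl) fun t ht => ht.1.le)
    (Ψ_intervalIntegrable measurable_id (measurable_const.sub measurable_id)
      (fun t ht => ht.1.le) fun t ht => sub_nonneg.2 ht.2)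
    hΦ₁X.integral_prod_left hΦ₂X.integral_prod_left increments₁ increments₂).trans
    (setIntegral_pairMean_sub hS hΦ₁X hΦ₂X)

/-- **Duality with error term** (Athreya–Swart, correction to "Branching-coalescing
particle systems", formula (1.8): integrated duality). -/
theorem integrated_duality
    {Ω : Type*} [MeasurableSpace Ω] (P : Measure Ω) [IsProbabilityMeasure P]
    {E₁ E₂ : Type*}
    [TopologicalSpace E₁] [TopologicalSpace.MetrizableSpace E₁]
    [MeasurableSpace E₁] [BorelSpace E₁]
    [TopologicalSpace E₂] [TopologicalSpace.MetrizableSpace E₂]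
    [MeasurableSpace E₂] [BorelSpace E₂]
    (Ψ Φ₁ Φ₂ : E₁ × E₂ → ℝ)
    (hΨm : Measurable Ψ) (C : ℝ) (hΨb : ∀ x, |Ψ x| ≤ C)
    (hΦ₁m : Measurable Φ₁) (hΦ₂m : Measurable Φ₂)
    (X₁ : ℝ → Ω → E₁) (X₂ : ℝ → Ω → E₂)
    (hX₁sm : ∀ t, StronglyMeasurable (X₁ t))
    (hX₂sm : ∀ t, StronglyMeasurable (X₂ t))
    -- càdlàg sample paths on [0,∞)
    (hX₁rc : ∀ ω, ∀ t : ℝ, 0 ≤ t → ContinuousWithinAt (fun s => X₁ s ω) (Ici t) t)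
    (hX₁ll : ∀ ω, ∀ t : ℝ, 0 < t →
      ∃ l, Tendsto (fun s => X₁ s ω) (nhdsWithin t (Iio t)) (nhds l))
    (hX₂rc : ∀ ω, ∀ t : ℝ, 0 ≤ t → ContinuousWithinAt (fun s => X₂ s ω) (Ici t) t)
    (hX₂ll : ∀ ω, ∀ t : ℝ, 0 < t →
      ∃ l, Tendsto (fun s => X₂ s ω) (nhdsWithin t (Iio t)) (nhds l))
    -- X¹ and X² are independent
    (hindep : IndepFun (fun ω t => X₁ t ω) (fun ω t => X₂ t ω) P)
    -- martingale problem for X¹ (with integrability), for every x₂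
    (hΨint₁ : ∀ x₂, ∀ t : ℝ, 0 ≤ t → Integrable (fun ω => Ψ (X₁ t ω, x₂)) P)
    (hΦint₁ : ∀ x₂, ∀ t : ℝ, 0 ≤ t →
      (∫⁻ s in Icc (0 : ℝ) t, ∫⁻ ω, ENNReal.ofReal |Φ₁ (X₁ s ω, x₂)| ∂P) < ⊤)
    (hmart₁ : ∀ x₂, Martingale
      (fun (t : ℝ≥0) ω => Ψ (X₁ t ω, x₂) - ∫ s in (0 : ℝ)..(t : ℝ), Φ₁ (X₁ s ω, x₂))
      (Filtration.natural (fun (t : ℝ≥0) => X₁ t) (fun t => hX₁sm t)) P)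
    -- martingale problem for X² (with integrability), for every x₁
    (hΨint₂ : ∀ x₁, ∀ t : ℝ, 0 ≤ t → Integrable (fun ω => Ψ (x₁, X₂ t ω)) P)
    (hΦint₂ : ∀ x₁, ∀ t : ℝ, 0 ≤ t →
      (∫⁻ s in Icc (0 : ℝ) t, ∫⁻ ω, ENNReal.ofReal |Φ₂ (x₁, X₂ s ω)| ∂P) < ⊤)
    (hmart₂ : ∀ x₁, Martingale
      (fun (t : ℝ≥0) ω => Ψ (x₁, X₂ t ω) - ∫ s in (0 : ℝ)..(t : ℝ), Φ₂ (x₁, X₂ s ω))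
      (Filtration.natural (fun (t : ℝ≥0) => X₂ t) (fun t => hX₂sm t)) P)
    -- double integrability assumption (1.7)
    (hΦΦ₁ : ∀ T : ℝ, 0 ≤ T →
      (∫⁻ s in Icc (0 : ℝ) T, ∫⁻ t in Icc (0 : ℝ) T,
        ∫⁻ ω, ENNReal.ofReal |Φ₁ (X₁ s ω, X₂ t ω)| ∂P) < ⊤)
    (hΦΦ₂ : ∀ T : ℝ, 0 ≤ T →
      (∫⁻ s in Icc (0 : ℝ) T, ∫⁻ t in Icc (0 : ℝ) T,
        ∫⁻ ω, ENNReal.ofReal |Φ₂ (X₁ s ω, X₂ t ω)| ∂P) < ⊤) :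
    ∀ S : ℝ, 0 < S →
      ∫ T in (0 : ℝ)..S,
          ((∫ ω, Ψ (X₁ T ω, X₂ 0 ω) ∂P) - ∫ ω, Ψ (X₁ 0 ω, X₂ T ω) ∂P)
        = ∫ T in (0 : ℝ)..S, ∫ t in (0 : ℝ)..T,
            ∫ ω, (Φ₁ (X₁ t ω, X₂ (T - t) ω) - Φ₂ (X₁ t ω, X₂ (T - t) ω)) ∂P := by
  intro S hS
  have hX₁ := measurable_of_continuousWithinAt_Ici (fun t _ => (hX₁sm t).measurable) hX₁rc
  have hX₂ := measurable_of_continuousWithinAt_Ici (fun t _ => (hX₂sm t).measurable) hX₂rc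
  simp only [← Real.enorm_eq_ofReal_abs, ← restrict_Ioc_eq_restrict_Icc]
    at hΦint₁ hΦint₂ hΦΦ₁ hΦΦ₂
  exact integrated_duality_general hX₁ hX₂
    (fun s t _ _ => hindep.comp (measurable_pi_apply s) (measurable_pi_apply t))
    hΨm.stronglyMeasurable hΨb hΦ₁m.stronglyMeasurable hΦ₂m.stronglyMeasurable
    hΦint₁ hmart₁ hΦint₂ hmart₂ hS.le (hΦΦ₁ S hS.le) (hΦΦ₂ S hS.le)
end

section
/- Let E₁ and E₂ be metrizable topological spaces with their Borel σ-algebras, let Ψ : E₁ × E₂ → ℝ be bounded and jointly Borel measurable, and let Φ₁, Φ₂ : E₁ × E₂ → ℝ be jointly Borel measurable. Let X¹ and X² be independent càdlàg processes with values in E₁ and E₂ such that for each x₂ ∈ E₂ the process t ↦ Ψ(X¹_t, x₂) − ∫₀ᵗ Φ₁(X¹_s, x₂) ds is a martingale with respect to the filtration generated by X¹ (with the integrability conditions E[|Ψ(X¹_t,x₂)|] < ∞ and ∫₀ᵗ E[|Φ₁(X¹_s,x₂)|] ds < ∞ for all t), and symmetrically for X² and Φ₂. Assume ∫₀ᵀ∫₀ᵀ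 E[|Φᵢ(X¹_s, X²_t)|] ds dt < ∞ for all T ≥ 0, i = 1,2. If Φ₁(x₁, x₂) ≤ Φ₂(x₁, x₂) for all x₁ ∈ E₁ and x₂ ∈ E₂, then E[Ψ(X¹_T, X²_0)] ≤ E[Ψ(X¹_0, X²_T)] for every T ∈ [0,∞). -/
open MeasureTheory ProbabilityTheory Filter Set
open scoped NNReal ENNReal

/-!
Put `F(s, t) = E[Ψ(X¹_s, X²_t)]` and `φᵢ(s, t) = E[Φᵢ(X¹_s, X²_t)]`. Freezing one process by
independence, Dynkin's formula for the other one says that `φ₁` and `φ₂` are, in integrated form,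
the partial derivatives of `F`. Integrating both over the triangle `s + t ≤ u`, the values of `F`
on the hypotenuse cancel and
`∫₀ᵘ (F(0, s) - F(s, 0)) ds = ∬ (φ₂ - φ₁)`.
The right-hand side is nondecreasing in `u` and the integrand on the left is continuous, so the
integrand is nonnegative at every time `T`.
-/

section Triangle

/-- The triangle `{(s, t) | 0 < s, 0 < t, s + t ≤ u}` over which the duality error term is
integrated. The two legs are left out so that its sections are the intervals `Ioc` of the interval
integral. -/
def triangle (u : ℝ) : Set (ℝ × ℝ) := {p | 0 < p.1 ∧ 0 < p.2 ∧ p.1 + p.2 ≤ u}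

lemma measurableSet_triangle (u : ℝ) : MeasurableSet (triangle u) :=
  (measurableSet_lt measurable_const measurable_fst).inter
    ((measurableSet_lt measurable_const measurable_snd).inter
      (measurableSet_le (measurable_fst.add measurable_snd) measurable_const))

lemma triangle_mono {u v : ℝ} (huv : u ≤ v) : triangle u ⊆ triangle v :=
  fun _ ⟨hs, ht, hst⟩ => ⟨hs, ht, hst.trans huv⟩

lemma triangle_subset_Ioc_prod (u : ℝ) : triangle u ⊆ Ioc 0 u ×ˢ Ioc 0 u :=
  fun _ ⟨hs, ht, hst⟩ => ⟨⟨hs, by linarith⟩, ht, by linarith⟩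

lemma restrict_triangle_le (u : ℝ) : (volume : Measure (ℝ × ℝ)).restrict (triangle u) ≤
    (volume.restrict (Ioc 0 u)).prod (volume.restrict (Ioc 0 u)) := by
  rw [Measure.prod_restrict]
  exact Measure.restrict_mono (triangle_subset_Ioc_prod u) le_rfl

lemma swap_preimage_triangle (u : ℝ) : Prod.swap ⁻¹' triangle u = triangle u := by
  ext p
  simp only [triangle, mem_preimage, mem_ofPred_eq, Prod.fst_swap, Prod.snd_swap]
  rw [add_comm, and_left_comm]

variable {G : Type*} [NormedAddCommGroup G] {φ : ℝ × ℝ → G} {u : ℝ}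

lemma integrableOn_triangle_swap (hφ : IntegrableOn φ (triangle u)) :
    IntegrableOn (fun p => φ p.swap) (triangle u) := by
  rw [← swap_preimage_triangle]
  exact (Measure.measurePreserving_swap.integrableOn_comp_preimage
    MeasurableEquiv.prodComm.measurableEmbedding).2 hφ

variable [NormedSpace ℝ G]

lemma integral_triangle_section (u s : ℝ) (φ : ℝ × ℝ → G) :
    ∫ t, (triangle u).indicator φ (s, t) =
      (Ioc 0 u).indicator (fun s => ∫ t in Ioc 0 (u - s), φ (s, t)) s := by
  by_cases hs : s ∈ Ioc 0 u
  · rw [indicator_of_mem hs, ← integral_indicator measurableSet_Ioc]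
    refine integral_congr_ae (.of_forall fun t => ?_)
    simp only [indicator, triangle, mem_ofPred_eq, mem_Ioc, hs.1, true_and, le_sub_iff_add_le']
  · rw [indicator_of_notMem hs]
    refine integral_eq_zero_of_ae (.of_forall fun t => ?_)
    exact indicator_of_notMem (fun h => hs (triangle_subset_Ioc_prod u h).1) φ

lemma integrableOn_integral_triangle_section (hφ : IntegrableOn φ (triangle u)) :
    IntegrableOn (fun s => ∫ t in Ioc 0 (u - s), φ (s, t)) (Ioc 0 u) := by
  rw [← integrable_indicator_iff measurableSet_Ioc]
  refine (((integrable_indicator_iff (measurableSet_triangle u)).2 hφ).integral_prod_left).congr ?_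
  exact .of_forall fun s => integral_triangle_section u s φ

lemma setIntegral_triangle (hφ : IntegrableOn φ (triangle u)) :
    ∫ p in triangle u, φ p = ∫ s in Ioc 0 u, ∫ t in Ioc 0 (u - s), φ (s, t) := by
  have hφ' := (integrable_indicator_iff (measurableSet_triangle u)).2 hφ
  rw [← integral_indicator (measurableSet_triangle u), Measure.volume_eq_prod,
    integral_prod _ hφ', ← integral_indicator measurableSet_Ioc]
  simp only [integral_triangle_section]

end Triangle

section Boundary

lemma nonneg_of_monotoneOn_integral {D : ℝ → ℝ} {a : ℝ} (hD : ContinuousOn D (Ici a))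
    (hmono : MonotoneOn (fun u => ∫ s in a..u, D s) (Ici a)) {x : ℝ} (hx : a ≤ x) : 0 ≤ D x := by
  have hint : IntervalIntegrable D volume a x :=
    (hD.mono (by rw [uIcc_of_le hx]; exact Icc_subset_Ici_self)).intervalIntegrable
  have hderiv : HasDerivWithinAt (fun u => ∫ s in a..u, D s) (D x) (Ici x) x :=
    intervalIntegral.integral_hasDerivWithinAt_right hint
      ((hD.mono (Ioi_subset_Ici hx)).stronglyMeasurableAtFilter_nhdsWithin measurableSet_Ioi x)
      ((hD x hx).mono (Ioi_subset_Ici hx))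
  rw [← hderiv.derivWithin (uniqueDiffOn_Ici x x self_mem_Ici)]
  exact (hmono.mono (Ici_subset_Ici.2 hx)).derivWithin_nonneg

lemma setIntegral_triangle_eq_of_ae_sub_eq {F φ : ℝ × ℝ → ℝ} {u : ℝ} (hu : 0 ≤ u)
    (hφ : IntegrableOn φ (triangle u)) (hF₀ : IntervalIntegrable (fun s => F (s, 0)) volume 0 u)
    (hF : ∀ᵐ s ∂volume.restrict (Ioc 0 u),
      F (s, u - s) - F (s, 0) = ∫ t in (0 : ℝ)..(u - s), φ (s, t)) :
    ∫ p in triangle u, φ p = (∫ s in (0 : ℝ)..u, F (s, u - s)) - ∫ s in (0 : ℝ)..u, F (s, 0) := by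
  have hsec : (fun s => ∫ t in Ioc 0 (u - s), φ (s, t)) =ᵐ[volume.restrict (Ioc 0 u)]
      fun s => F (s, u - s) - F (s, 0) := by
    filter_upwards [hF, ae_restrict_mem measurableSet_Ioc] with s hs hsu
    rw [hs, intervalIntegral.integral_of_le (sub_nonneg.2 hsu.2)]
  have hdiff : IntervalIntegrable (fun s => F (s, u - s) - F (s, 0)) volume 0 u :=
    (intervalIntegrable_iff_integrableOn_Ioc_of_le hu).2
      ((integrableOn_integral_triangle_section hφ).congr hsec)
  have hdiag : IntervalIntegrable (fun s => F (s, u - s)) volume 0 u := by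
    simpa only [sub_add_cancel] using hdiff.add hF₀
  rw [← intervalIntegral.integral_sub hdiag hF₀, intervalIntegral.integral_of_le hu,
    setIntegral_triangle hφ]
  exact integral_congr_ae hsec

variable {F φ₁ φ₂ : ℝ × ℝ → ℝ}

lemma integral_boundary_sub_eq_setIntegral_triangle {u : ℝ} (hu : 0 ≤ u)
    (hφ₁ : IntegrableOn φ₁ (triangle u)) (hφ₂ : IntegrableOn φ₂ (triangle u))
    (hF₁ : ∀ᵐ t ∂volume.restrict (Ioc 0 u),
      F (u - t, t) - F (0, t) = ∫ s in (0 : ℝ)..(u - t), φ₁ (s, t))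
    (hF₂ : ∀ᵐ s ∂volume.restrict (Ioc 0 u),
      F (s, u - s) - F (s, 0) = ∫ t in (0 : ℝ)..(u - s), φ₂ (s, t))
    (hb₁ : IntervalIntegrable (fun t => F (0, t)) volume 0 u)
    (hb₂ : IntervalIntegrable (fun s => F (s, 0)) volume 0 u) :
    ∫ s in (0 : ℝ)..u, (F (0, s) - F (s, 0)) = ∫ p in triangle u, (φ₂ p - φ₁ p) := by
  have hswap : ∫ p in triangle u, φ₁ p = ∫ p in triangle u, φ₁ p.swap := by
    conv_rhs => rw [← swap_preimage_triangle]
    exact (Measure.measurePreserving_swap.setIntegral_preimage_emb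
      MeasurableEquiv.prodComm.measurableEmbedding φ₁ (triangle u)).symm
  have hreflect : ∫ s in (0 : ℝ)..u, F (u - s, s) = ∫ s in (0 : ℝ)..u, F (s, u - s) := by
    simpa using
      intervalIntegral.integral_comp_sub_left (a := 0) (b := u) (fun s => F (s, u - s)) u
  have h₁ := setIntegral_triangle_eq_of_ae_sub_eq (F := F ∘ Prod.swap) hu
    (integrableOn_triangle_swap hφ₁) hb₁ hF₁
  have h₂ := setIntegral_triangle_eq_of_ae_sub_eq hu hφ₂ hb₂ hF₂
  simp only [Function.comp_apply, Prod.swap_prod_mk] at h₁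
  rw [integral_sub hφ₂ hφ₁, hswap, h₁, h₂, hreflect, intervalIntegral.integral_sub hb₁ hb₂]
  ring

lemma boundary_le_of_partialDeriv_le
    (hφ₁ : ∀ u, 0 ≤ u → IntegrableOn φ₁ (triangle u))
    (hφ₂ : ∀ u, 0 ≤ u → IntegrableOn φ₂ (triangle u))
    (hF₁ : ∀ u, 0 ≤ u → ∀ᵐ t ∂volume.restrict (Ioc 0 u),
      F (u - t, t) - F (0, t) = ∫ s in (0 : ℝ)..(u - t), φ₁ (s, t))
    (hF₂ : ∀ u, 0 ≤ u → ∀ᵐ s ∂volume.restrict (Ioc 0 u),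
      F (s, u - s) - F (s, 0) = ∫ t in (0 : ℝ)..(u - s), φ₂ (s, t))
    (hb₁ : ContinuousOn (fun t => F (0, t)) (Ici 0))
    (hb₂ : ContinuousOn (fun s => F (s, 0)) (Ici 0))
    (hle : ∀ u, 0 ≤ u → φ₁ ≤ᵐ[volume.restrict (triangle u)] φ₂) {T : ℝ} (hT : 0 ≤ T) :
    F (T, 0) ≤ F (0, T) := by
  have hint {g : ℝ → ℝ} (hg : ContinuousOn g (Ici 0)) {u : ℝ} (hu : 0 ≤ u) :
      IntervalIntegrable g volume 0 u :=
    (hg.mono (by rw [uIcc_of_le hu]; exact Icc_subset_Ici_self)).intervalIntegrable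
  have herror (u : ℝ) (hu : 0 ≤ u) :=
    integral_boundary_sub_eq_setIntegral_triangle hu (hφ₁ u hu) (hφ₂ u hu) (hF₁ u hu) (hF₂ u hu)
      (hint hb₁ hu) (hint hb₂ hu)
  refine sub_nonneg.1 (nonneg_of_monotoneOn_integral (hb₁.sub hb₂) (fun u hu v hv huv => ?_) hT)
  calc ∫ s in (0 : ℝ)..u, (F (0, s) - F (s, 0))
      = ∫ p in triangle u, (φ₂ p - φ₁ p) := herror u hu
    _ ≤ ∫ p in triangle v, (φ₂ p - φ₁ p) :=
        setIntegral_mono_set ((hφ₂ v hv).sub (hφ₁ v hv))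
          ((hle v hv).mono fun _ hp => sub_nonneg.2 hp) (triangle_mono huv).eventuallyLE
    _ = ∫ s in (0 : ℝ)..v, (F (0, s) - F (s, 0)) := (herror v hv).symm

end Boundary

section Fubini

variable {ι κ Ω E₁ E₂ G : Type*} [MeasurableSpace ι] [MeasurableSpace κ] [MeasurableSpace Ω]
  [MeasurableSpace E₁] [MeasurableSpace E₂] [NormedAddCommGroup G]

lemma ae_aemeasurable_section {μ : Measure ι} {P : Measure Ω} [SFinite P] {X : ι → Ω → E₁}
    (hX : AEMeasurable (fun p : ι × Ω => X p.1 p.2) (μ.prod P)) :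
    ∀ᵐ i ∂μ, AEMeasurable (X i) P := by
  filter_upwards [Measure.ae_ae_of_ae_prod hX.ae_eq_mk] with i hi
  exact ⟨_, hX.measurable_mk.comp measurable_prodMk_left, hi⟩

lemma integrable_prod_of_lintegral_lt_top {μ : Measure ι} {P : Measure Ω} [SFinite P]
    {f : ι × Ω → ℝ} (hf : AEStronglyMeasurable f (μ.prod P))
    (hfin : ∫⁻ i, ∫⁻ ω, ENNReal.ofReal |f (i, ω)| ∂P ∂μ < ⊤) : Integrable f (μ.prod P) := by
  refine ⟨hf, ?_⟩
  rw [hasFiniteIntegral_iff_enorm, lintegral_prod _ hf.enorm]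
  simpa only [Real.enorm_eq_ofReal_abs] using hfin

variable {μ : Measure ι} {ν : Measure κ} {P : Measure Ω} [SFinite μ] [SFinite ν] [SFinite P]

lemma measurePreserving_prodAssoc_swap :
    MeasurePreserving ((MeasurableEquiv.prodComm.prodCongr (.refl Ω)).trans
      MeasurableEquiv.prodAssoc : (ι × κ) × Ω ≃ᵐ κ × (ι × Ω))
      ((μ.prod ν).prod P) (ν.prod (μ.prod P)) :=
  (measurePreserving_prodAssoc ν μ P).comp (Measure.measurePreserving_swap.prod (.id P))

lemma ae_integrable_section_fst {f : (ι × κ) × Ω → G} (hf : Integrable f ((μ.prod ν).prod P)) :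
    ∀ᵐ i ∂μ, Integrable (fun p : κ × Ω => f ((i, p.1), p.2)) (ν.prod P) :=
  ((measurePreserving_prodAssoc μ ν P).symm.integrable_comp_of_integrable hf).prod_right_ae

lemma ae_integrable_section_snd {f : (ι × κ) × Ω → G} (hf : Integrable f ((μ.prod ν).prod P)) :
    ∀ᵐ j ∂ν, Integrable (fun p : ι × Ω => f ((p.1, j), p.2)) (μ.prod P) :=
  (measurePreserving_prodAssoc_swap.symm.integrable_comp_of_integrable hf).prod_right_ae

lemma aemeasurable_prodMk_of_aemeasurable {X : ι → Ω → E₁} {Y : κ → Ω → E₂}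
    (hX : AEMeasurable (fun p : ι × Ω => X p.1 p.2) (μ.prod P))
    (hY : AEMeasurable (fun p : κ × Ω => Y p.1 p.2) (ν.prod P)) :
    AEMeasurable (fun w : (ι × κ) × Ω => (X w.1.1 w.2, Y w.1.2 w.2)) ((μ.prod ν).prod P) :=
  (hX.comp_quasiMeasurePreserving (Measure.quasiMeasurePreserving_snd.comp
    measurePreserving_prodAssoc_swap.quasiMeasurePreserving)).prodMk
  (hY.comp_quasiMeasurePreserving (Measure.quasiMeasurePreserving_snd.comp
    (measurePreserving_prodAssoc μ ν P).quasiMeasurePreserving))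

lemma integrable_triple_of_lintegral_lt_top {X : ι → Ω → E₁} {Y : κ → Ω → E₂}
    (hX : AEMeasurable (fun p : ι × Ω => X p.1 p.2) (μ.prod P))
    (hY : AEMeasurable (fun p : κ × Ω => Y p.1 p.2) (ν.prod P)) {f : E₁ × E₂ → ℝ}
    (hf : Measurable f)
    (hfin : ∫⁻ i, ∫⁻ j, ∫⁻ ω, ENNReal.ofReal |f (X i ω, Y j ω)| ∂P ∂ν ∂μ < ⊤) :
    Integrable (fun w : (ι × κ) × Ω => f (X w.1.1 w.2, Y w.1.2 w.2)) ((μ.prod ν).prod P) := by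
  have hm : AEMeasurable (fun w : (ι × κ) × Ω => f (X w.1.1 w.2, Y w.1.2 w.2))
      ((μ.prod ν).prod P) := hf.comp_aemeasurable (aemeasurable_prodMk_of_aemeasurable hX hY)
  refine integrable_prod_of_lintegral_lt_top hm.aestronglyMeasurable ?_
  simp only [← Real.enorm_eq_ofReal_abs] at hfin ⊢
  rwa [lintegral_prod _ hm.enorm.lintegral_prod_right']

end Fubini

section Independence

variable {α ι Ω E₁ E₂ : Type*} [MeasurableSpace α] [MeasurableSpace Ω]
  [MeasurableSpace E₁] [MeasurableSpace E₂] {f : E₁ × E₂ → ℝ} {ν : Measure α} {ρ : Measure E₂}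
  {Z : α → E₁} {W : α → E₂}

lemma integrable_prod_of_map_eq_prod (hZ : AEMeasurable Z ν) (hW : AEMeasurable W ν)
    (hlaw : ν.map (fun a => (Z a, W a)) = (ν.map Z).prod ρ) (hf : Measurable f)
    (hint : Integrable (fun a => f (Z a, W a)) ν) : Integrable f ((ν.map Z).prod ρ) := by
  rw [← hlaw]
  exact (integrable_map_measure hf.aestronglyMeasurable (hZ.prodMk hW)).2 hint

lemma integral_comp_prodMk_of_map_eq_prod [SFinite ν] [SFinite ρ] (hZ : AEMeasurable Z ν)
    (hW : AEMeasurable W ν) (hlaw : ν.map (fun a => (Z a, W a)) = (ν.map Z).prod ρ)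
    (hf : Measurable f) (hint : Integrable (fun a => f (Z a, W a)) ν) :
    ∫ a, f (Z a, W a) ∂ν = ∫ y, ∫ a, f (Z a, y) ∂ν ∂ρ :=
  calc ∫ a, f (Z a, W a) ∂ν
      = ∫ z, f z ∂ν.map (fun a => (Z a, W a)) :=
        (integral_map (hZ.prodMk hW) hf.aestronglyMeasurable).symm
    _ = ∫ y, ∫ x, f (x, y) ∂ν.map Z ∂ρ := by
        rw [hlaw, integral_prod_symm f (integrable_prod_of_map_eq_prod hZ hW hlaw hf hint)]
    _ = ∫ y, ∫ a, f (Z a, y) ∂ν ∂ρ := integral_congr_ae <| .of_forall fun y =>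
        integral_map hZ (hf.comp measurable_prodMk_right).aestronglyMeasurable

variable {P : Measure Ω} [IsFiniteMeasure P] {X : ι → Ω → E₁} {B : Ω → E₂}

lemma map_prodMk_of_ae_indepFun [MeasurableSpace ι] {μ : Measure ι}
    (hX : AEMeasurable (fun p : ι × Ω => X p.1 p.2) (μ.prod P)) (hB : AEMeasurable B P)
    (hind : ∀ᵐ i ∂μ, IndepFun (X i) B P) :
    (μ.prod P).map (fun p => (X p.1 p.2, B p.2)) =
      ((μ.prod P).map (fun p => X p.1 p.2)).prod (P.map B) := by
  have hXB : AEMeasurable (fun p : ι × Ω => (X p.1 p.2, B p.2)) (μ.prod P) :=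
    hX.prodMk (hB.comp_quasiMeasurePreserving Measure.quasiMeasurePreserving_snd)
  refine Measure.ext_of_lintegral _ fun f hf => ?_
  have hsection : ∀ᵐ i ∂μ, ∫⁻ ω, f (X i ω, B ω) ∂P = ∫⁻ ω, ∫⁻ y, f (X i ω, y) ∂P.map B ∂P := by
    filter_upwards [hind, ae_aemeasurable_section hX] with i hi hXi
    rw [← lintegral_map' (f := f) hf.aemeasurable (hXi.prodMk hB),
      hi.map_prod_eq_prod_map_map hXi hB, lintegral_prod _ hf.aemeasurable,
      lintegral_map' hf.lintegral_prod_right'.aemeasurable hXi]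
  calc ∫⁻ z, f z ∂(μ.prod P).map (fun p => (X p.1 p.2, B p.2))
      = ∫⁻ i, ∫⁻ ω, f (X i ω, B ω) ∂P ∂μ :=
        (lintegral_map' hf.aemeasurable hXB).trans (lintegral_prod _ (hf.comp_aemeasurable hXB))
    _ = ∫⁻ i, ∫⁻ ω, ∫⁻ y, f (X i ω, y) ∂P.map B ∂P ∂μ := lintegral_congr_ae hsection
    _ = ∫⁻ p, ∫⁻ y, f (X p.1 p.2, y) ∂P.map B ∂μ.prod P :=
        (lintegral_prod _ (hf.lintegral_prod_right'.comp_aemeasurable hX)).symm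
    _ = ∫⁻ z, f z ∂((μ.prod P).map (fun p => X p.1 p.2)).prod (P.map B) := by
        rw [lintegral_prod _ hf.aemeasurable,
          lintegral_map' hf.lintegral_prod_right'.aemeasurable hX]

variable {A : Ω → E₁}

lemma integral_comp_prodMk_of_indepFun_s5 (hA : AEMeasurable A P) (hB : AEMeasurable B P)
    (hind : IndepFun A B P) (hf : Measurable f) (hint : Integrable (fun ω => f (A ω, B ω)) P) :
    ∫ ω, f (A ω, B ω) ∂P = ∫ y, ∫ ω, f (A ω, y) ∂P ∂P.map B :=
  integral_comp_prodMk_of_map_eq_prod hA hB (hind.map_prod_eq_prod_map_map hA hB) hf hint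

lemma integrable_integral_comp_prodMk_of_indepFun (hA : AEMeasurable A P) (hB : AEMeasurable B P)
    (hind : IndepFun A B P) (hf : Measurable f) (hint : Integrable (fun ω => f (A ω, B ω)) P) :
    Integrable (fun y => ∫ ω, f (A ω, y) ∂P) (P.map B) :=
  (integrable_prod_of_map_eq_prod hA hB (hind.map_prod_eq_prod_map_map hA hB) hf
    hint).integral_prod_right.congr <| .of_forall fun _ =>
      integral_map hA (hf.comp measurable_prodMk_right).aestronglyMeasurable

lemma integrable_comp_prodMk_of_bounded (hA : AEMeasurable A P) (hB : AEMeasurable B P)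
    (hf : Measurable f) {C : ℝ} (hC : ∀ z, |f z| ≤ C) : Integrable (fun ω => f (A ω, B ω)) P :=
  .of_bound (hf.comp_aemeasurable (hA.prodMk hB)).aestronglyMeasurable C (.of_forall fun _ => hC _)

lemma continuousOn_integral_prodMk_of_indepFun [TopologicalSpace ι] [FirstCountableTopology ι]
    {S : Set ι} (hX : ∀ i ∈ S, AEMeasurable (X i) P) (hB : AEMeasurable B P)
    (hind : ∀ i ∈ S, IndepFun (X i) B P) (hf : Measurable f) {C : ℝ} (hC : ∀ z, |f z| ≤ C)
    (hcont : ∀ y, ContinuousOn (fun i => ∫ ω, f (X i ω, y) ∂P) S) :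
    ContinuousOn (fun i => ∫ ω, f (X i ω, B ω) ∂P) S := by
  have hint (i : ι) (hi : i ∈ S) := integrable_comp_prodMk_of_bounded (hX i hi) hB hf hC
  refine ContinuousOn.congr (continuousOn_of_dominated (bound := fun _ => C * P.real univ)
    (fun i hi => ?_) (fun i _ => .of_forall fun y => ?_) (integrable_const _)
    (.of_forall hcont)) fun i hi =>
      integral_comp_prodMk_of_indepFun_s5 (hX i hi) hB (hind i hi) hf (hint i hi)
  · exact (integrable_integral_comp_prodMk_of_indepFun (hX i hi) hB (hind i hi) hf
      (hint i hi)).aestronglyMeasurable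
  · exact norm_integral_le_of_norm_le_const (.of_forall fun _ => hC _)

end Independence

section Dynkin

variable {Ω E : Type*} [MeasurableSpace Ω] {P : Measure Ω} {X : ℝ → Ω → E} {f φ : E → ℝ} {t : ℝ}

/-- Dynkin's formula `E[f(X_t)] - E[f(X_0)] = E[∫₀ᵗ φ(X_s) ds]` at a time `t ≥ 0`, together with
the integrability of `φ(X_s)` on `(0, t] × Ω`. This is what remains of the martingale problem
`A f = φ` after taking expectations. -/
structure HasDynkinFormula (P : Measure Ω) (X : ℝ → Ω → E) (f φ : E → ℝ) (t : ℝ) : Prop where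
  integrable : Integrable (fun p : ℝ × Ω => φ (X p.1 p.2)) ((volume.restrict (Ioc 0 t)).prod P)
  integral_sub : ∫ ω, f (X t ω) ∂P - ∫ ω, f (X 0 ω) ∂P =
    ∫ p, φ (X p.1 p.2) ∂(volume.restrict (Ioc 0 t)).prod P

lemma HasDynkinFormula.sub_eq_intervalIntegral [SFinite P] (h : HasDynkinFormula P X f φ t)
    (ht : 0 ≤ t) : ∫ ω, f (X t ω) ∂P - ∫ ω, f (X 0 ω) ∂P =
      ∫ s in (0 : ℝ)..t, ∫ ω, φ (X s ω) ∂P := by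
  rw [h.integral_sub, integral_prod _ h.integrable, intervalIntegral.integral_of_le ht]

lemma HasDynkinFormula.continuousOn [SFinite P] (h : ∀ t, 0 ≤ t → HasDynkinFormula P X f φ t) :
    ContinuousOn (fun t => ∫ ω, f (X t ω) ∂P) (Ici 0) := by
  intro t ht
  have ht₁ : (0 : ℝ) ≤ t + 1 := add_nonneg ht zero_le_one
  have hprimitive : ContinuousOn (fun r => ∫ s in Ioc 0 r, ∫ ω, φ (X s ω) ∂P) (Icc 0 (t + 1)) :=
    intervalIntegral.continuousOn_primitive <| (integrableOn_Icc_iff_integrableOn_Ioc).2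
      (h _ ht₁).integrable.integral_prod_left
  have hIcc : ContinuousOn (fun r => ∫ ω, f (X r ω) ∂P) (Icc 0 (t + 1)) :=
    (continuousOn_const.add hprimitive).congr fun r hr => eq_add_of_sub_eq' <| by
      rw [(h r hr.1).sub_eq_intervalIntegral hr.1, intervalIntegral.integral_of_le hr.1]
  refine (hIcc t ⟨ht, by linarith⟩).mono_of_mem_nhdsWithin ?_
  rw [← Ici_inter_Iic]
  exact inter_mem self_mem_nhdsWithin (mem_nhdsWithin_of_mem_nhds (Iic_mem_nhds (lt_add_one t)))

variable [MeasurableSpace E]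

lemma measurable_of_measurable_uncurry (hX : Measurable fun p : ℝ≥0 × Ω => X p.1 p.2) {r : ℝ}
    (hr : 0 ≤ r) : Measurable (X r) :=
  hX.comp (measurable_prodMk_left (x := (⟨r, hr⟩ : ℝ≥0)))

lemma aemeasurable_uncurry_restrict_Ioc
    (hX : Measurable fun p : ℝ≥0 × Ω => X p.1 p.2) (T : ℝ) :
    AEMeasurable (fun p : ℝ × Ω => X p.1 p.2) ((volume.restrict (Ioc 0 T)).prod P) := by
  refine ⟨fun p => X p.1.toNNReal p.2,
    hX.comp ((measurable_real_toNNReal.comp measurable_fst).prodMk measurable_snd), ?_⟩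
  filter_upwards [Measure.quasiMeasurePreserving_fst.ae (ae_restrict_mem measurableSet_Ioc)]
    with p hp
  rw [Real.coe_toNNReal _ hp.1.le]

lemma hasDynkinFormula_of_martingale {m : Filtration ℝ≥0 ‹MeasurableSpace Ω›}
    [IsFiniteMeasure P] (hX : Measurable fun p : ℝ≥0 × Ω => X p.1 p.2) (hφ : Measurable φ)
    (ht : 0 ≤ t) (hf : Integrable (fun ω => f (X t ω)) P)
    (hfin : ∫⁻ s in Icc 0 t, ∫⁻ ω, ENNReal.ofReal |φ (X s ω)| ∂P < ⊤)
    (hmart : Martingale (fun (r : ℝ≥0) ω => f (X r ω) - ∫ s in (0 : ℝ)..r, φ (X s ω)) m P) :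
    HasDynkinFormula P X f φ t := by
  have hint : Integrable (fun p : ℝ × Ω => φ (X p.1 p.2))
      ((volume.restrict (Ioc 0 t)).prod P) :=
    integrable_prod_of_lintegral_lt_top
      (hφ.comp_aemeasurable (aemeasurable_uncurry_restrict_Ioc hX t)).aestronglyMeasurable
      ((lintegral_mono_set Ioc_subset_Icc_self).trans_lt hfin)
  refine ⟨hint, ?_⟩
  lift t to ℝ≥0 using ht
  have hmean := hmart.setIntegral_eq (zero_le (a := t)) MeasurableSet.univ
  simp only [setIntegral_univ, NNReal.coe_zero, intervalIntegral.integral_same, sub_zero,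
    intervalIntegral.integral_of_le t.coe_nonneg] at hmean
  rw [integral_sub hf hint.integral_prod_right] at hmean
  rw [integral_prod_symm _ hint, hmean, sub_sub_cancel]

end Dynkin

section Measurability

lemma tendsto_floor_mul_add_one_div_nhdsGE (t : ℝ≥0) :
    Tendsto (fun n : ℕ => ((⌊t * (n + 1)⌋₊ : ℝ≥0) + 1) / (n + 1)) atTop
      (nhdsWithin t (Ici t)) := by
  have hpos (n : ℕ) : (0 : ℝ≥0) < n + 1 := by positivity
  have hlower (n : ℕ) : t ≤ ((⌊t * (n + 1)⌋₊ : ℝ≥0) + 1) / (n + 1) :=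
    (le_div_iff₀ (hpos n)).2 (Nat.lt_floor_add_one _).le
  have hupper (n : ℕ) : ((⌊t * (n + 1)⌋₊ : ℝ≥0) + 1) / (n + 1) ≤ t + 1 / (n + 1) := by
    rw [div_le_iff₀ (hpos n), add_mul, one_div_mul_cancel (hpos n).ne']
    gcongr
    exact Nat.floor_le zero_le
  have hlim : Tendsto (fun n : ℕ => t + 1 / ((n : ℝ≥0) + 1)) atTop (nhds t) := by
    simpa only [add_zero] using
      tendsto_const_nhds.add (tendsto_one_div_add_atTop_nhds_zero_nat (𝕜 := ℝ≥0))
  exact tendsto_nhdsWithin_iff.2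
    ⟨tendsto_of_tendsto_of_tendsto_of_le_of_le tendsto_const_nhds hlim hlower hupper,
      .of_forall hlower⟩

lemma measurable_uncurry_of_continuousWithinAt_Ici {Ω E : Type*} [MeasurableSpace Ω]
    [TopologicalSpace E] [TopologicalSpace.PseudoMetrizableSpace E] [MeasurableSpace E]
    [BorelSpace E] {X : ℝ≥0 → Ω → E} (hX : ∀ t, Measurable (X t))
    (hrc : ∀ ω t, ContinuousWithinAt (fun s => X s ω) (Ici t) t) :
    Measurable fun p : ℝ≥0 × Ω => X p.1 p.2 := by
  have hgrid (n : ℕ) : Measurable fun p : ℝ≥0 × Ω =>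
      X (((⌊p.1 * (n + 1)⌋₊ : ℝ≥0) + 1) / (n + 1)) p.2 := by
    have hX' : Measurable fun q : ℕ × Ω => X (((q.1 : ℝ≥0) + 1) / (n + 1)) q.2 :=
      measurable_from_prod_countable_right fun k => hX ((k + 1) / (n + 1))
    have hfloor : Measurable fun p : ℝ≥0 × Ω => ⌊p.1 * (n + 1)⌋₊ :=
      Nat.measurable_floor.comp (measurable_fst.mul_const _)
    simpa only [Function.comp_def] using hX'.comp (hfloor.prodMk measurable_snd)
  refine measurable_of_tendsto_metrizable hgrid (tendsto_pi_nhds.2 fun p => ?_)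
  exact (hrc p.2 p.1).tendsto.comp (tendsto_floor_mul_add_one_div_nhdsGE p.1)

end Measurability

section Duality

variable {Ω E₁ E₂ : Type*} [MeasurableSpace Ω] [MeasurableSpace E₁] [MeasurableSpace E₂]
  {P : Measure Ω} [IsFiniteMeasure P] {X : ℝ → Ω → E₁} {f φ : E₁ × E₂ → ℝ} {C : ℝ}

lemma HasDynkinFormula.prodMk_of_indepFun {B : Ω → E₂} {t : ℝ}
    (hX : Measurable fun p : ℝ≥0 × Ω => X p.1 p.2) (hB : AEMeasurable B P)
    (hind : ∀ s, 0 ≤ s → IndepFun (X s) B P) (hf : Measurable f) (hC : ∀ z, |f z| ≤ C)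
    (hφ : Measurable φ) (ht : 0 ≤ t)
    (h : ∀ y, HasDynkinFormula P X (fun x => f (x, y)) (fun x => φ (x, y)) t)
    (hint : Integrable (fun p : ℝ × Ω => φ (X p.1 p.2, B p.2))
      ((volume.restrict (Ioc 0 t)).prod P)) :
    HasDynkinFormula P (fun s ω => (X s ω, B ω)) f φ t := by
  refine ⟨hint, ?_⟩
  have hXt {r : ℝ} (hr : 0 ≤ r) : AEMeasurable (X r) P :=
    (measurable_of_measurable_uncurry hX hr).aemeasurable
  have hfint {r : ℝ} (hr : 0 ≤ r) := integrable_comp_prodMk_of_bounded (hXt hr) hB hf hC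
  have hmean {r : ℝ} (hr : 0 ≤ r) :=
    integral_comp_prodMk_of_indepFun_s5 (hXt hr) hB (hind r hr) hf (hfint hr)
  have hmean_int {r : ℝ} (hr : 0 ≤ r) :=
    integrable_integral_comp_prodMk_of_indepFun (hXt hr) hB (hind r hr) hf (hfint hr)
  have hXm := aemeasurable_uncurry_restrict_Ioc (P := P) hX t
  have hlaw := map_prodMk_of_ae_indepFun hXm hB <|
    (ae_restrict_mem measurableSet_Ioc).mono fun s hs => hind s hs.1.le
  calc ∫ ω, f (X t ω, B ω) ∂P - ∫ ω, f (X 0 ω, B ω) ∂P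
      = ∫ y, (∫ ω, f (X t ω, y) ∂P - ∫ ω, f (X 0 ω, y) ∂P) ∂P.map B := by
        rw [hmean ht, hmean le_rfl, MeasureTheory.integral_sub (hmean_int ht) (hmean_int le_rfl)]
    _ = ∫ y, ∫ p, φ (X p.1 p.2, y) ∂(volume.restrict (Ioc 0 t)).prod P ∂P.map B :=
        integral_congr_ae (.of_forall fun y => (h y).integral_sub)
    _ = ∫ p, φ (X p.1 p.2, B p.2) ∂(volume.restrict (Ioc 0 t)).prod P :=
        (integral_comp_prodMk_of_map_eq_prod hXm
          (hB.comp_quasiMeasurePreserving Measure.quasiMeasurePreserving_snd) hlaw hφ hint).symm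

lemma ae_sub_eq_intervalIntegral_of_indepFun {Y : ℝ → Ω → E₂} {u : ℝ}
    (hX : Measurable fun p : ℝ≥0 × Ω => X p.1 p.2) (hY : ∀ t, 0 ≤ t → AEMeasurable (Y t) P)
    (hind : ∀ s t, 0 ≤ s → 0 ≤ t → IndepFun (X s) (Y t) P)
    (hf : Measurable f) (hC : ∀ z, |f z| ≤ C) (hφ : Measurable φ)
    (h : ∀ y t, 0 ≤ t → HasDynkinFormula P X (fun x => f (x, y)) (fun x => φ (x, y)) t)
    (hint : ∀ᵐ t ∂volume.restrict (Ioc 0 u), Integrable (fun p : ℝ × Ω => φ (X p.1 p.2, Y t p.2))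
      ((volume.restrict (Ioc 0 u)).prod P)) :
    ∀ᵐ t ∂volume.restrict (Ioc 0 u),
      ∫ ω, f (X (u - t) ω, Y t ω) ∂P - ∫ ω, f (X 0 ω, Y t ω) ∂P =
        ∫ s in (0 : ℝ)..(u - t), ∫ ω, φ (X s ω, Y t ω) ∂P := by
  filter_upwards [hint, ae_restrict_mem measurableSet_Ioc] with t hφt ht
  have hut : 0 ≤ u - t := sub_nonneg.2 ht.2
  have hsub : volume.restrict (Ioc 0 (u - t)) ≤ volume.restrict (Ioc 0 u) :=
    Measure.restrict_mono (Ioc_subset_Ioc_right (sub_le_self u ht.1.le)) le_rfl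
  exact (HasDynkinFormula.prodMk_of_indepFun hX (hY t ht.1.le) (fun s hs => hind s t hs ht.1.le)
    hf hC hφ hut (fun y => h y _ hut)
    (hφt.mono_measure (Measure.prod_mono hsub le_rfl))).sub_eq_intervalIntegral hut

lemma continuousOn_integral_prodMk_of_hasDynkinFormula {B : Ω → E₂}
    (hX : ∀ t, 0 ≤ t → AEMeasurable (X t) P) (hB : AEMeasurable B P)
    (hind : ∀ t, 0 ≤ t → IndepFun (X t) B P) (hf : Measurable f) (hC : ∀ z, |f z| ≤ C)
    (h : ∀ y t, 0 ≤ t → HasDynkinFormula P X (fun x => f (x, y)) (fun x => φ (x, y)) t) :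
    ContinuousOn (fun t => ∫ ω, f (X t ω, B ω) ∂P) (Ici 0) :=
  continuousOn_integral_prodMk_of_indepFun hX hB hind hf hC fun y =>
    HasDynkinFormula.continuousOn (f := fun x => f (x, y)) (h y)

lemma integrable_triple_of_lintegral_Icc_lt_top {Y : ℝ → Ω → E₂} {u : ℝ}
    (hX : Measurable fun p : ℝ≥0 × Ω => X p.1 p.2) (hY : Measurable fun p : ℝ≥0 × Ω => Y p.1 p.2)
    (hφ : Measurable φ)
    (hfin : ∫⁻ s in Icc 0 u, ∫⁻ t in Icc 0 u, ∫⁻ ω, ENNReal.ofReal |φ (X s ω, Y t ω)| ∂P < ⊤) :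
    Integrable (fun w : (ℝ × ℝ) × Ω => φ (X w.1.1 w.2, Y w.1.2 w.2))
      (((volume.restrict (Ioc 0 u)).prod (volume.restrict (Ioc 0 u))).prod P) := by
  rw [← Measure.restrict_congr_set Ioc_ae_eq_Icc] at hfin
  exact integrable_triple_of_lintegral_lt_top (aemeasurable_uncurry_restrict_Ioc hX u)
    (aemeasurable_uncurry_restrict_Ioc hY u) hφ hfin

theorem everywhere_inequality_le_general {Ψ Φ₁ Φ₂ : E₁ × E₂ → ℝ} {C : ℝ} (hΨm : Measurable Ψ)
    (hΨb : ∀ x, |Ψ x| ≤ C) (hΦ₁m : Measurable Φ₁) (hΦ₂m : Measurable Φ₂)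
    {X₁ : ℝ → Ω → E₁} {X₂ : ℝ → Ω → E₂} (hX₁ : Measurable fun p : ℝ≥0 × Ω => X₁ p.1 p.2)
    (hX₂ : Measurable fun p : ℝ≥0 × Ω => X₂ p.1 p.2)
    (hindep : ∀ s t, 0 ≤ s → 0 ≤ t → IndepFun (X₁ s) (X₂ t) P)
    (hdyn₁ : ∀ x₂ t, 0 ≤ t →
      HasDynkinFormula P X₁ (fun x₁ => Ψ (x₁, x₂)) (fun x₁ => Φ₁ (x₁, x₂)) t)
    (hdyn₂ : ∀ x₁ t, 0 ≤ t →
      HasDynkinFormula P X₂ (fun x₂ => Ψ (x₁, x₂)) (fun x₂ => Φ₂ (x₁, x₂)) t)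
    (hΦΦ₁ : ∀ T : ℝ, 0 ≤ T → ∫⁻ s in Icc 0 T, ∫⁻ t in Icc 0 T,
      ∫⁻ ω, ENNReal.ofReal |Φ₁ (X₁ s ω, X₂ t ω)| ∂P < ⊤)
    (hΦΦ₂ : ∀ T : ℝ, 0 ≤ T → ∫⁻ s in Icc 0 T, ∫⁻ t in Icc 0 T,
      ∫⁻ ω, ENNReal.ofReal |Φ₂ (X₁ s ω, X₂ t ω)| ∂P < ⊤)
    (hΦle : ∀ x₁ x₂, Φ₁ (x₁, x₂) ≤ Φ₂ (x₁, x₂)) {T : ℝ} (hT : 0 ≤ T) :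
    ∫ ω, Ψ (X₁ T ω, X₂ 0 ω) ∂P ≤ ∫ ω, Ψ (X₁ 0 ω, X₂ T ω) ∂P := by
  have hm₁ (t : ℝ) (ht : 0 ≤ t) := (measurable_of_measurable_uncurry hX₁ ht).aemeasurable (μ := P)
  have hm₂ (t : ℝ) (ht : 0 ≤ t) := (measurable_of_measurable_uncurry hX₂ ht).aemeasurable (μ := P)
  have hindep' (t s : ℝ) (ht : 0 ≤ t) (hs : 0 ≤ s) := (hindep s t hs ht).symm
  have hΨm' : Measurable (Ψ ∘ Prod.swap) := hΨm.comp measurable_swap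
  have hint₁ (u : ℝ) (hu : 0 ≤ u) :=
    integrable_triple_of_lintegral_Icc_lt_top hX₁ hX₂ hΦ₁m (hΦΦ₁ u hu)
  have hint₂ (u : ℝ) (hu : 0 ≤ u) :=
    integrable_triple_of_lintegral_Icc_lt_top hX₁ hX₂ hΦ₂m (hΦΦ₂ u hu)
  have hle (u : ℝ) (hu : 0 ≤ u) : (fun p : ℝ × ℝ => ∫ ω, Φ₁ (X₁ p.1 ω, X₂ p.2 ω) ∂P)
      ≤ᵐ[volume.restrict (triangle u)] fun p => ∫ ω, Φ₂ (X₁ p.1 ω, X₂ p.2 ω) ∂P := by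
    refine ae_mono (restrict_triangle_le u) ?_
    filter_upwards [(hint₁ u hu).prod_right_ae, (hint₂ u hu).prod_right_ae] with p hp₁ hp₂
    exact integral_mono hp₁ hp₂ fun ω => hΦle _ _
  exact boundary_le_of_partialDeriv_le (F := fun p => ∫ ω, Ψ (X₁ p.1 ω, X₂ p.2 ω) ∂P)
    (fun u hu => (hint₁ u hu).integral_prod_left.mono_measure (restrict_triangle_le u))
    (fun u hu => (hint₂ u hu).integral_prod_left.mono_measure (restrict_triangle_le u))
    (fun u hu => ae_sub_eq_intervalIntegral_of_indepFun hX₁ hm₂ hindep hΨm hΨb hΦ₁m hdyn₁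
      (ae_integrable_section_snd (hint₁ u hu)))
    (fun u hu => ae_sub_eq_intervalIntegral_of_indepFun hX₂ hm₁ hindep' hΨm' (fun _ => hΨb _)
      (hΦ₂m.comp measurable_swap) hdyn₂ (ae_integrable_section_fst (hint₂ u hu)))
    (continuousOn_integral_prodMk_of_hasDynkinFormula (φ := Φ₂ ∘ Prod.swap) hm₂ (hm₁ 0 le_rfl)
      (fun t ht => hindep' t 0 ht le_rfl) hΨm' (fun _ => hΨb _) hdyn₂)
    (continuousOn_integral_prodMk_of_hasDynkinFormula hm₁ (hm₂ 0 le_rfl)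
      (fun s hs => hindep s 0 hs le_rfl) hΨm hΨb hdyn₁)
    hle hT

end Duality

/-- **Duality with error term** (Athreya–Swart, correction to "Branching-coalescing
particle systems", Corollary, reversed inequalities). -/
theorem everywhere_inequality_le
    {Ω : Type*} [MeasurableSpace Ω] (P : Measure Ω) [IsProbabilityMeasure P]
    {E₁ E₂ : Type*}
    [TopologicalSpace E₁] [TopologicalSpace.MetrizableSpace E₁]
    [MeasurableSpace E₁] [BorelSpace E₁]
    [TopologicalSpace E₂] [TopologicalSpace.MetrizableSpace E₂]
    [MeasurableSpace E₂] [BorelSpace E₂]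
    (Ψ Φ₁ Φ₂ : E₁ × E₂ → ℝ)
    (hΨm : Measurable Ψ) (C : ℝ) (hΨb : ∀ x, |Ψ x| ≤ C)
    (hΦ₁m : Measurable Φ₁) (hΦ₂m : Measurable Φ₂)
    (X₁ : ℝ → Ω → E₁) (X₂ : ℝ → Ω → E₂)
    (hX₁sm : ∀ t, StronglyMeasurable (X₁ t))
    (hX₂sm : ∀ t, StronglyMeasurable (X₂ t))
    -- càdlàg sample paths on [0,∞)
    (hX₁rc : ∀ ω, ∀ t : ℝ, 0 ≤ t → ContinuousWithinAt (fun s => X₁ s ω) (Ici t) t)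
    (hX₁ll : ∀ ω, ∀ t : ℝ, 0 < t →
      ∃ l, Tendsto (fun s => X₁ s ω) (nhdsWithin t (Iio t)) (nhds l))
    (hX₂rc : ∀ ω, ∀ t : ℝ, 0 ≤ t → ContinuousWithinAt (fun s => X₂ s ω) (Ici t) t)
    (hX₂ll : ∀ ω, ∀ t : ℝ, 0 < t →
      ∃ l, Tendsto (fun s => X₂ s ω) (nhdsWithin t (Iio t)) (nhds l))
    -- X¹ and X² are independent
    (hindep : IndepFun (fun ω t => X₁ t ω) (fun ω t => X₂ t ω) P)
    -- martingale problem for X¹ (with integrability), for every x₂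
    (hΨint₁ : ∀ x₂, ∀ t : ℝ, 0 ≤ t → Integrable (fun ω => Ψ (X₁ t ω, x₂)) P)
    (hΦint₁ : ∀ x₂, ∀ t : ℝ, 0 ≤ t →
      (∫⁻ s in Icc (0 : ℝ) t, ∫⁻ ω, ENNReal.ofReal |Φ₁ (X₁ s ω, x₂)| ∂P) < ⊤)
    (hmart₁ : ∀ x₂, Martingale
      (fun (t : ℝ≥0) ω => Ψ (X₁ t ω, x₂) - ∫ s in (0 : ℝ)..(t : ℝ), Φ₁ (X₁ s ω, x₂))
      (Filtration.natural (fun (t : ℝ≥0) => X₁ t) (fun t => hX₁sm t)) P)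
    -- martingale problem for X² (with integrability), for every x₁
    (hΨint₂ : ∀ x₁, ∀ t : ℝ, 0 ≤ t → Integrable (fun ω => Ψ (x₁, X₂ t ω)) P)
    (hΦint₂ : ∀ x₁, ∀ t : ℝ, 0 ≤ t →
      (∫⁻ s in Icc (0 : ℝ) t, ∫⁻ ω, ENNReal.ofReal |Φ₂ (x₁, X₂ s ω)| ∂P) < ⊤)
    (hmart₂ : ∀ x₁, Martingale
      (fun (t : ℝ≥0) ω => Ψ (x₁, X₂ t ω) - ∫ s in (0 : ℝ)..(t : ℝ), Φ₂ (x₁, X₂ s ω))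
      (Filtration.natural (fun (t : ℝ≥0) => X₂ t) (fun t => hX₂sm t)) P)
    -- double integrability assumption (1.7)
    (hΦΦ₁ : ∀ T : ℝ, 0 ≤ T →
      (∫⁻ s in Icc (0 : ℝ) T, ∫⁻ t in Icc (0 : ℝ) T,
        ∫⁻ ω, ENNReal.ofReal |Φ₁ (X₁ s ω, X₂ t ω)| ∂P) < ⊤)
    (hΦΦ₂ : ∀ T : ℝ, 0 ≤ T →
      (∫⁻ s in Icc (0 : ℝ) T, ∫⁻ t in Icc (0 : ℝ) T,
        ∫⁻ ω, ENNReal.ofReal |Φ₂ (X₁ s ω, X₂ t ω)| ∂P) < ⊤)     (hΦle : ∀ x₁ x₂, Φ₁ (x₁, x₂) ≤ Φ₂ (x₁, x₂)) :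
    ∀ T : ℝ, 0 ≤ T →
      (∫ ω, Ψ (X₁ T ω, X₂ 0 ω) ∂P) ≤ ∫ ω, Ψ (X₁ 0 ω, X₂ T ω) ∂P := by
  have hX₁ := measurable_uncurry_of_continuousWithinAt_Ici (X := fun t : ℝ≥0 => X₁ t)
    (fun t => (hX₁sm t).measurable) fun ω t =>
      (hX₁rc ω t t.2).comp NNReal.continuous_coe.continuousWithinAt fun _ hs => hs
  have hX₂ := measurable_uncurry_of_continuousWithinAt_Ici (X := fun t : ℝ≥0 => X₂ t)
    (fun t => (hX₂sm t).measurable) fun ω t =>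
      (hX₂rc ω t t.2).comp NNReal.continuous_coe.continuousWithinAt fun _ hs => hs
  exact fun T hT => everywhere_inequality_le_general hΨm hΨb hΦ₁m hΦ₂m hX₁ hX₂
    (fun s t _ _ => hindep.comp (measurable_pi_apply s) (measurable_pi_apply t))
    (fun x₂ t ht => hasDynkinFormula_of_martingale hX₁ (hΦ₁m.comp measurable_prodMk_right) ht
      (hΨint₁ x₂ t ht) (hΦint₁ x₂ t ht) (hmart₁ x₂))
    (fun x₁ t ht => hasDynkinFormula_of_martingale hX₂ (hΦ₂m.comp measurable_prodMk_left) ht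
      (hΨint₂ x₁ t ht) (hΦint₂ x₁ t ht) (hmart₂ x₁))
    hΦΦ₁ hΦΦ₂ hΦle hT
end
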